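/- There exist absolute constants c > 0 and c' > 0 such that for every odd prime p and every A ⊆ F_p with 2 ≤ |A| ≤ p^{9/16}, one has |(A−A)(A−A)| ≥ c'·min{p, |A|^{3/2+c}}. -/

import Mathlib

open Finset

/-- The difference set `S − T = {s − t : s ∈ S, t ∈ T}`. -/
def diffSet (p : ℕ) (S T : Finset (ZMod p)) : Finset (ZMod p) :=
  (S ×ˢ T).image fun x => x.1 - x.2

/-- The product set `S·T = {s·t : s ∈ S, t ∈ T}`. -/
def prodSet (p : ℕ) (S T : Finset (ZMod p)) : Finset (ZMod p) :=
  (S ×ˢ T).image fun x => x.1 * x.2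

/-!
Write `n = |A|`, let `X` be the set of pairs of distinct elements of `A` and `G` the set of nonzero
products of two differences, and let `E_j` be the `j`-th moment of the number of representations of
an element as a ratio of two nonzero differences. Cauchy–Schwarz gives `n ^ 8 ≲ |X| ^ 4 ≤ |G| E₂`,
and the point-plane incidence bound gives `E₂ ≲ n ^ (13 / 2)`; this is the exponent `3 / 2`.

If `|G|` were about `n ^ (3 / 2)`, then `E₂` would have its maximal size. Hölder's inequality gives
`|X| ^ 2 E₂ ^ 3 ≤ W E₃ ^ 2`, where `W` is the number of solutions of `(a - b) g' = (c - d) g` with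
`g, g' ∈ G`. The incidence bound gives `W ≲ (n ^ 2 |G|) ^ (3 / 2)`, and after splitting the lines
that define `E₃` according to the number of points of `A × A` on them, a bound for the number of
rich lines gives `E₃ ≲ n ^ 9.115`. The two sides are then about `n ^ 23.5` and at most
`n ^ 23.48`, a contradiction.

Up to a loss of `M ^ ε`, the incidence bound is Rudnev's theorem. Points and planes become two
families of lines in three-space over an extension field, an incidence becomes an intersection of
lines, and a polynomial of low degree vanishing on one family has an irreducible factor whose zero
set contains many lines of both. Along a line of one family in this ruled surface, the slopes of the
lines of the other family are an affine function of the base coordinate, and such lines come from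
collinear points in one plane.
-/

section Polynomial

open Polynomial

theorem natDegree_eq_zero_of_derivative_eq_zero_of_lt_char {R : Type*} [CommRing R]
    [NoZeroDivisors R] {p : ℕ} [CharP R p] {f : R[X]} (hdeg : f.natDegree < p)
    (hf : derivative f = 0) : f.natDegree = 0 := by
  by_contra hne
  have hcoeff := coeff_derivative f (f.natDegree - 1)
  rw [hf, coeff_zero, Nat.cast_pred (by omega), sub_add_cancel, Nat.sub_add_cancel (by omega),
    eq_comm, mul_eq_zero] at hcoeff
  rcases hcoeff with hlead | hcast
  · exact hne (by simp [leadingCoeff_eq_zero.1 hlead])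
  · exact hne (Nat.eq_zero_of_dvd_of_lt ((CharP.cast_eq_zero_iff R p _).1 hcast) hdeg)

theorem exists_eq_C_mul_of_wronskian_eq_zero {K : Type*} [Field K] {p : ℕ} [CharP K p]
    {f g : K[X]} (hf : f ≠ 0) (hfdeg : f.natDegree < p) (hgdeg : g.natDegree < p)
    (h : wronskian f g = 0) : ∃ c : K, g = C c * f := by
  classical
  obtain ⟨f₁, g₁, hf₁, hg₁, hunit⟩ := extract_gcd f g
  set q := gcd f g
  have hq : q ≠ 0 := left_ne_zero_of_mul (hf₁ ▸ hf)
  have hf₁0 : f₁ ≠ 0 := right_ne_zero_of_mul (hf₁ ▸ hf)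
  have hwron : wronskian f g = q ^ 2 * wronskian f₁ g₁ := by
    rw [hf₁, hg₁]
    simp only [wronskian, derivative_mul]
    ring
  have hw₁ : wronskian f₁ g₁ = 0 :=
    (mul_eq_zero.1 (hwron ▸ h)).resolve_left (pow_ne_zero 2 hq)
  obtain ⟨hf₁', hg₁'⟩ := ((gcd_isUnit_iff f₁ g₁).1 hunit).wronskian_eq_zero_iff.1 hw₁
  have hdeg_le {u v : K[X]} (huv : u = q * v) (hv : v ≠ 0) : v.natDegree ≤ u.natDegree := by
    rw [huv, natDegree_mul hq hv]
    omega
  have hf₁C := eq_C_of_natDegree_eq_zero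
    (natDegree_eq_zero_of_derivative_eq_zero_of_lt_char ((hdeg_le hf₁ hf₁0).trans_lt hfdeg) hf₁')
  have hg₁C : g₁ = C (g₁.coeff 0) := by
    rcases eq_or_ne g₁ 0 with rfl | hg₁0
    · simp
    · exact eq_C_of_natDegree_eq_zero (natDegree_eq_zero_of_derivative_eq_zero_of_lt_char
        ((hdeg_le hg₁ hg₁0).trans_lt hgdeg) hg₁')
  have ha : f₁.coeff 0 ≠ 0 := fun h0 => hf₁0 (by rw [hf₁C, h0, C_0])
  refine ⟨g₁.coeff 0 / f₁.coeff 0, ?_⟩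
  calc g = q * C (g₁.coeff 0) := by rw [← hg₁C, ← hg₁]
    _ = q * (C (g₁.coeff 0 / f₁.coeff 0) * C (f₁.coeff 0)) := by
      rw [← C_mul, div_mul_cancel₀ _ ha]
    _ = C (g₁.coeff 0 / f₁.coeff 0) * f := by rw [← hf₁C, mul_left_comm, ← hf₁]

end Polynomial

section MvPolynomial

open MvPolynomial

theorem finrank_restrictTotalDegree (σ : Type*) [Fintype σ] (K : Type*) [Field K] (n : ℕ) :
    Module.finrank K (restrictTotalDegree σ K n) = (Fintype.card σ + n).choose n := by
  classical
  have hexp : {m : σ →₀ ℕ | (m.sum fun _ e => e) ≤ n} =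
      ((range (n + 1)).biUnion fun i => (univ : Finset σ).finsuppAntidiag i : Finset (σ →₀ ℕ)) := by
    ext m
    simp [Finsupp.sum_fintype]
  have hdisj : Set.PairwiseDisjoint (range (n + 1) : Set ℕ)
      fun i => (univ : Finset σ).finsuppAntidiag i := by
    intro i _ j _ hij
    rw [Function.onFun, disjoint_left]
    intro m hi hj
    exact hij ((mem_finsuppAntidiag.1 hi).1.symm.trans (mem_finsuppAntidiag.1 hj).1)
  rw [restrictTotalDegree, hexp, Module.finrank_eq_card_basis (basisRestrictSupport K _)]
  simp only [Fintype.card_coe, SetLike.coe_sort_coe, card_biUnion hdisj,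
    card_finsuppAntidiag_nat_eq_choose, card_univ, ← Nat.multichoose_eq]
  rw [Nat.sum_range_multichoose, add_comm, Nat.choose_symm_add]

theorem six_mul_finrank_restrictTotalDegree_fin_three (K : Type*) [Field K] (n : ℕ) :
    6 * Module.finrank K (restrictTotalDegree (Fin 3) K n) = (n + 1) * (n + 2) * (n + 3) := by
  rw [finrank_restrictTotalDegree, Fintype.card_fin, add_comm 3 n, Nat.choose_symm_add]
  have h := Nat.descFactorial_eq_factorial_mul_choose (n + 3) 3
  simp only [Nat.descFactorial, Nat.factorial] at h
  grind

theorem totalDegree_pderiv_le {σ R : Type*} [CommSemiring R] (i : σ) (F : MvPolynomial σ R) :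
    (pderiv i F).totalDegree ≤ F.totalDegree - 1 := by
  classical
  rw [totalDegree, Finset.sup_le_iff]
  intro m hm
  rw [mem_support_iff, coeff_pderiv] at hm
  have hle := le_totalDegree (mem_support_iff.2 (left_ne_zero_of_mul hm))
  rw [Finsupp.sum_add_index' (by simp) (by simp), Finsupp.sum_single_index rfl] at hle
  omega

theorem totalDegree_eq_zero_of_pderiv_eq_zero {σ R : Type*} [CommRing R] [NoZeroDivisors R]
    {p : ℕ} [CharP R p] {F : MvPolynomial σ R} (hdeg : F.totalDegree < p)
    (h : ∀ i, pderiv i F = 0) : F.totalDegree = 0 := by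
  rw [totalDegree_eq_zero_iff]
  intro m hm i
  by_contra hne
  have hcoeff := coeff_pderiv (i := i) F (m - Finsupp.single i 1)
  rw [h i, tsub_add_cancel_of_le (Finsupp.single_le_iff.2 (by omega)), coeff_zero, eq_comm,
    mul_eq_zero] at hcoeff
  have hcast : ((m i : ℕ) : R) = 0 := by
    simpa [Nat.cast_pred (Nat.pos_of_ne_zero hne)] using
      hcoeff.resolve_left (mem_support_iff.1 hm)
  have hle : m i ≤ F.totalDegree := (m.le_degree i).trans (le_totalDegree hm)
  exact hne (Nat.eq_zero_of_dvd_of_lt ((CharP.cast_eq_zero_iff R p _).1 hcast) (by omega))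

theorem pderiv_comm {σ R : Type*} [CommRing R] (i j : σ) (F : MvPolynomial σ R) :
    pderiv i (pderiv j F) = pderiv j (pderiv i F) := by
  classical
  have hbracket : ⁅pderiv (R := R) i, pderiv j⁆ = 0 := derivation_ext fun k => by
    have hconst (a b : σ) : pderiv (R := R) a (pderiv b (X k)) = 0 := by
      rw [pderiv_X, Pi.single_apply]
      split_ifs <;> simp
    rw [Derivation.commutator_apply, hconst, hconst, sub_zero, Derivation.zero_apply]
  exact sub_eq_zero.1 ((Derivation.commutator_apply F).symm.trans
    (DFunLike.congr_fun hbracket F))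

theorem derivative_aeval_eq_sum {σ R : Type*} [Fintype σ] [CommSemiring R]
    (f : σ → Polynomial R) (F : MvPolynomial σ R) :
    Polynomial.derivative (aeval f F) =
      ∑ i, aeval f (pderiv i F) * Polynomial.derivative (f i) := by
  classical
  induction F using MvPolynomial.induction_on with
  | C a => simp
  | add F G hF hG => simp only [map_add, hF, hG, add_mul, sum_add_distrib]
  | mul_X F j hF =>
    have hX (i : σ) : aeval f (pderiv (R := R) i (X j)) * Polynomial.derivative (f i) =
        if i = j then Polynomial.derivative (f i) else 0 := by
      rw [pderiv_X]
      rcases eq_or_ne i j with rfl | hij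
      · simp
      · simp [hij, hij.symm]
    simp only [map_mul, pderiv_mul, map_add, aeval_X, Polynomial.derivative_mul, hF, add_mul,
      sum_add_distrib, mul_assoc, hX, ← mul_sum, sum_ite_eq', mem_univ, if_true]
    simp only [mul_sum, mul_comm, mul_left_comm]

theorem totalDegree_aeval_X_le {σ R : Type*} [CommSemiring R] [Nontrivial R] (i : σ)
    (f : Polynomial R) :
    (Polynomial.aeval (X i : MvPolynomial σ R) f).totalDegree ≤ f.natDegree := by
  rw [Polynomial.aeval_eq_sum_range]
  refine (totalDegree_finsetSum _ _).trans (Finset.sup_le fun k hk => ?_)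
  calc _ ≤ k := (totalDegree_smul_le _ _).trans <| (totalDegree_pow _ _).trans (by simp)
    _ ≤ f.natDegree := Nat.lt_succ_iff.1 (mem_range.1 hk)

end MvPolynomial

section Bezout

open MvPolynomial

variable {K : Type*} [Field K]

theorem exists_eq_mul_of_mul_add_mul_eq_zero {σ : Type*} {F G : MvPolynomial σ K}
    (hF : Irreducible F) (hFG : ¬F ∣ G) {A B : MvPolynomial σ K} (h : F * A + G * B = 0) :
    ∃ C, A = -G * C ∧ B = F * C := by
  have hdvd : F ∣ G * B := ⟨-A, by linear_combination h⟩
  obtain ⟨C, rfl⟩ := (hF.prime.dvd_or_dvd hdvd).resolve_left hFG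
  exact ⟨C, mul_left_cancel₀ hF.ne_zero (by linear_combination h), rfl⟩

/-- The `K`-linear map `A ↦ Q * A` from polynomials of degree at most `m` to polynomials of degree
at most `n`. -/
noncomputable def mulLeftRestrict {σ : Type*} (Q : MvPolynomial σ K) {m n : ℕ}
    (h : m + Q.totalDegree ≤ n) :
    restrictTotalDegree σ K m →ₗ[K] restrictTotalDegree σ K n :=
  (LinearMap.mulLeft K Q).restrict fun A hA => by
    rw [mem_restrictTotalDegree] at hA
    rw [mem_restrictTotalDegree, LinearMap.mulLeft_apply]
    exact (totalDegree_mul _ _).trans (by omega)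

-- The term in degree `n` counts the relations `F * A + G * B = 0`, all multiples of `(-G, F)`.
theorem finrank_add_finrank_le_of_disjoint_ideal {σ : Type*} [Finite σ] {F G : MvPolynomial σ K}
    (hF : Irreducible F) (hFG : ¬F ∣ G) {b : ℕ} (hG : G.totalDegree ≤ b) (n : ℕ)
    {U : Submodule K (MvPolynomial σ K)}
    (hU : U ≤ restrictTotalDegree σ K (n + F.totalDegree + b))
    (hdisj : ∀ A B, F * A + G * B ∈ U → F * A + G * B = 0) :
    Module.finrank K U + (Module.finrank K (restrictTotalDegree σ K (n + b)) +
        Module.finrank K (restrictTotalDegree σ K (n + F.totalDegree))) ≤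
      Module.finrank K (restrictTotalDegree σ K (n + F.totalDegree + b)) +
        Module.finrank K (restrictTotalDegree σ K n) := by
  let V (m : ℕ) := restrictTotalDegree σ K m
  let combine : V (n + b) × V (n + F.totalDegree) →ₗ[K] V (n + F.totalDegree + b) :=
    (mulLeftRestrict F (by omega)).coprod (mulLeftRestrict G (by omega))
  let syzygy : V n →ₗ[K] V (n + b) × V (n + F.totalDegree) :=
    (mulLeftRestrict (-G) (by rw [totalDegree_neg]; omega)).prod (mulLeftRestrict F le_rfl)
  have hker : LinearMap.ker combine ≤ LinearMap.range syzygy := by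
    rintro ⟨⟨A, hA⟩, ⟨B, hB⟩⟩ hAB
    obtain ⟨C, rfl, rfl⟩ :=
      exists_eq_mul_of_mul_add_mul_eq_zero hF hFG (congrArg Subtype.val (LinearMap.mem_ker.1 hAB))
    have hC : C.totalDegree ≤ n := by
      rcases eq_or_ne C 0 with rfl | hC0
      · simp
      · rw [mem_restrictTotalDegree, totalDegree_mul_of_isDomain hF.ne_zero hC0] at hB
        omega
    exact ⟨⟨C, (mem_restrictTotalDegree _ _ _).2 hC⟩, rfl⟩
  have hinf : LinearMap.range combine ⊓ U.comap (V _).subtype = ⊥ := by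
    rw [eq_bot_iff]
    rintro _ ⟨⟨⟨A, B⟩, rfl⟩, hAB⟩
    exact Subtype.ext (hdisj A B hAB)
  have hrank := LinearMap.finrank_range_add_finrank_ker combine
  have hker_le : Module.finrank K (LinearMap.ker combine) ≤ Module.finrank K (V n) :=
    (Submodule.finrank_mono hker).trans (LinearMap.finrank_range_le syzygy)
  have hsup := Submodule.finrank_sup_add_finrank_inf_eq (LinearMap.range combine)
    (U.comap (V _).subtype)
  have hcomap : Module.finrank K (U.comap (V (n + F.totalDegree + b)).subtype) =
      Module.finrank K U := (Submodule.comapSubtypeEquivOfLe hU).finrank_eq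
  have hle := Submodule.finrank_le (LinearMap.range combine ⊔ U.comap (V _).subtype)
  rw [hinf, finrank_bot, hcomap] at hsup
  rw [Module.finrank_prod] at hrank
  simp only [V] at *
  omega

end Bezout

/-- The parameters of an affine line in three-space over `K`, read either as the *blue* line
`y = base`, `z = height - slope * x` or as the *red* line `x = base`, `z = height - slope * y`. -/
@[ext]
structure LineParam (K : Type*) where
  /-- The constant coordinate: `y` on a blue line and `x` on a red one. -/
  base : K
  /-- The value of `z` where the free coordinate vanishes. -/
  height : K
  /-- Minus the rate of change of `z` along the line. -/
  slope : K
deriving DecidableEq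

section Lines

open MvPolynomial

variable {K : Type*} [Field K] (l m r : LineParam K) (F : MvPolynomial (Fin 3) K)

/-- The restriction of a polynomial to a blue line, as a polynomial in the coordinate `x`. -/
noncomputable def restrictBlue : MvPolynomial (Fin 3) K →ₐ[K] Polynomial K :=
  aeval ![Polynomial.X, Polynomial.C l.base,
    Polynomial.C l.height - Polynomial.C l.slope * Polynomial.X]

/-- The restriction of a polynomial to a red line, as a polynomial in the coordinate `y`. -/
noncomputable def restrictRed : MvPolynomial (Fin 3) K →ₐ[K] Polynomial K :=
  aeval ![Polynomial.C r.base, Polynomial.X,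
    Polynomial.C r.height - Polynomial.C r.slope * Polynomial.X]

/-- The blue line `l` and the red line `r` intersect: their points with `x = r.base` and
`y = l.base` have the same coordinate `z`. -/
def Meets : Prop :=
  r.height - r.slope * l.base = l.height - l.slope * r.base

theorem natDegree_restrictBlue_le : (restrictBlue l F).natDegree ≤ F.totalDegree := by
  have hcoord : ∀ i, (![Polynomial.X, Polynomial.C l.base,
      Polynomial.C l.height - Polynomial.C l.slope * Polynomial.X] i).natDegree ≤ 1 := by
    rw [Fin.forall_fin_succ, Fin.forall_fin_two]
    refine ⟨Polynomial.natDegree_X_le, by simp, ?_⟩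
    simp only [Fin.succ_one_eq_two, Matrix.cons_val]
    compute_degree
  simpa only [restrictBlue, mul_one] using aeval_natDegree_le F le_rfl _ hcoord

theorem natDegree_restrictRed_le : (restrictRed r F).natDegree ≤ F.totalDegree := by
  have hcoord : ∀ i, (![Polynomial.C r.base, Polynomial.X,
      Polynomial.C r.height - Polynomial.C r.slope * Polynomial.X] i).natDegree ≤ 1 := by
    rw [Fin.forall_fin_succ, Fin.forall_fin_two]
    refine ⟨by simp, Polynomial.natDegree_X_le, ?_⟩
    simp only [Fin.succ_one_eq_two, Matrix.cons_val]
    compute_degree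
  simpa only [restrictRed, mul_one] using aeval_natDegree_le F le_rfl _ hcoord

theorem derivative_restrictBlue :
    Polynomial.derivative (restrictBlue l F) =
      restrictBlue l (pderiv 0 F) - Polynomial.C l.slope * restrictBlue l (pderiv 2 F) := by
  simp [restrictBlue, derivative_aeval_eq_sum, Fin.sum_univ_three]
  ring

theorem derivative_restrictRed :
    Polynomial.derivative (restrictRed r F) =
      restrictRed r (pderiv 1 F) - Polynomial.C r.slope * restrictRed r (pderiv 2 F) := by
  simp [restrictRed, derivative_aeval_eq_sum, Fin.sum_univ_three]
  ring

variable {l r} in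
theorem Meets.eval_restrictRed (h : Meets l r) :
    (restrictRed r F).eval l.base = (restrictBlue l F).eval r.base := by
  have hhom : (Polynomial.aeval l.base).comp (restrictRed r) =
      (Polynomial.aeval r.base).comp (restrictBlue l) := by
    refine algHom_ext fun i => ?_
    fin_cases i
    · simp [restrictBlue, restrictRed]
    · simp [restrictBlue, restrictRed]
    · simpa [restrictBlue, restrictRed, Meets] using h
  simpa only [AlgHom.comp_apply, Polynomial.coe_aeval_eq_eval] using DFunLike.congr_fun hhom F

theorem exists_restrictRed_eq_zero (R : Finset (LineParam K)) (d : ℕ)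
    (h : 6 * #R < (d + 2) * (d + 3)) :
    ∃ F : MvPolynomial (Fin 3) K, F ≠ 0 ∧ F.totalDegree ≤ d ∧ ∀ r ∈ R, restrictRed r F = 0 := by
  let coeffs : restrictTotalDegree (Fin 3) K d →ₗ[K] (R × Fin (d + 1) → K) :=
    LinearMap.pi fun x => Polynomial.lcoeff K x.2 ∘ₗ
      (restrictRed (x.1 : LineParam K)).toLinearMap ∘ₗ Submodule.subtype _
  have hdim : Module.finrank K (R × Fin (d + 1) → K) <
      Module.finrank K (restrictTotalDegree (Fin 3) K d) := by
    have := six_mul_finrank_restrictTotalDegree_fin_three K d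
    simp only [Module.finrank_fintype_fun_eq_card, Fintype.card_prod, Fintype.card_coe,
      Fintype.card_fin]
    nlinarith
  obtain ⟨⟨F, hFdeg⟩, hF, hF0⟩ :=
    (Submodule.ne_bot_iff _).1 (LinearMap.ker_ne_bot_of_finrank_lt hdim (f := coeffs))
  rw [mem_restrictTotalDegree] at hFdeg
  refine ⟨F, fun h0 => hF0 (Subtype.ext h0), hFdeg, fun r hr => Polynomial.ext fun n => ?_⟩
  by_cases hn : n < d + 1
  · exact congrFun (LinearMap.mem_ker.1 hF) (⟨r, hr⟩, ⟨n, hn⟩)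
  · have := natDegree_restrictRed_le r F
    exact Polynomial.coeff_eq_zero_of_natDegree_lt (by omega)

theorem restrictBlue_aeval_X (f : Polynomial K) :
    restrictBlue l (Polynomial.aeval (X 0) f) = f := by
  rw [← Polynomial.aeval_algHom_apply]
  simp [restrictBlue]

variable {l m} in
theorem exists_linear_separating (h : l ≠ m) : ∃ L : MvPolynomial (Fin 3) K,
    L.totalDegree ≤ 1 ∧ restrictBlue m L = 0 ∧ restrictBlue l L ≠ 0 := by
  by_cases hbase : l.base = m.base
  · refine ⟨X 2 - C m.height + C m.slope * X 0, ?_, by simp [restrictBlue], fun h0 => ?_⟩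
    · refine (totalDegree_add _ _).trans (max_le ((totalDegree_sub _ _).trans (by simp)) ?_)
      exact (totalDegree_mul _ _).trans (by simp)
    · have hdiff : Polynomial.C (l.height - m.height) -
          Polynomial.C (l.slope - m.slope) * Polynomial.X = 0 := by
        rw [← h0]
        simp [restrictBlue]
        ring
      have hheight : l.height = m.height := by
        simpa [sub_eq_zero] using congrArg (Polynomial.coeff · 0) hdiff
      have hslope : m.slope = l.slope := by
        simpa [Polynomial.coeff_C, sub_eq_zero] using congrArg (Polynomial.coeff · 1) hdiff
      exact h (LineParam.ext hbase hheight hslope.symm)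
  · refine ⟨X 1 - C m.base, (totalDegree_sub _ _).trans (by simp), by simp [restrictBlue], ?_⟩
    simpa [restrictBlue, sub_eq_zero] using hbase

theorem exists_interpolating (T : Finset (LineParam K)) :
    ∃ h : T → MvPolynomial (Fin 3) K, ∀ i, (h i).totalDegree + 1 ≤ #T ∧
      restrictBlue i (h i) ≠ 0 ∧ ∀ j ≠ i, restrictBlue j (h i) = 0 := by
  classical
  choose! L hdeg hvanish hne using fun (i j : T) (hij : i ≠ j) =>
    exists_linear_separating (fun h : (i : LineParam K) = j => hij (Subtype.ext h))
  refine ⟨fun i => ∏ j ∈ univ.erase i, L i j, fun i => ⟨?_, ?_, fun j hij => ?_⟩⟩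
  · have hle : (∏ j ∈ univ.erase i, L i j).totalDegree ≤ ∑ _j ∈ univ.erase i, 1 :=
      (totalDegree_finsetProd _ _).trans
        (sum_le_sum fun j hj => hdeg i j (ne_of_mem_erase hj).symm)
    have hpos : 0 < #T := card_pos.2 ⟨i, i.2⟩
    dsimp only
    simp only [sum_const, smul_eq_mul, mul_one, mem_univ, card_erase_of_mem, card_univ,
      Fintype.card_coe] at hle
    omega
  · rw [map_prod, prod_ne_zero_iff]
    exact fun j hj => hne i j (ne_of_mem_erase hj).symm
  · rw [map_prod]
    exact prod_eq_zero (mem_erase.2 ⟨hij, mem_univ j⟩) (hvanish i j hij.symm)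

theorem exists_submodule_of_lines (T : Finset (LineParam K)) {k n : ℕ} (hkn : #T + k ≤ n + 2) :
    ∃ U ≤ restrictTotalDegree (Fin 3) K n, Module.finrank K U = #T * k ∧
      ∀ u ∈ U, (∀ l ∈ T, restrictBlue l u = 0) → u = 0 := by
  obtain ⟨h, hh⟩ := exists_interpolating T
  obtain ⟨interpolate, happly⟩ : ∃ f : (T → Polynomial.degreeLT K k) →ₗ[K] MvPolynomial (Fin 3) K,
      ∀ c, f c = ∑ i, h i * Polynomial.aeval (X 0) (c i : Polynomial K) :=
    ⟨∑ i, LinearMap.mulLeft K (h i) ∘ₗ (Polynomial.aeval (X 0)).toLinearMap ∘ₗ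
      (Polynomial.degreeLT K k).subtype ∘ₗ LinearMap.proj i, fun c => by simp⟩
  have hrestrict (c) (i : T) : restrictBlue i (interpolate c) = restrictBlue i (h i) * c i := by
    rw [happly, map_sum, sum_eq_single i]
    · rw [map_mul, restrictBlue_aeval_X]
    · exact fun j _ hji => by rw [map_mul, (hh j).2.2 i hji.symm, zero_mul]
    · exact fun hi => absurd (mem_univ i) hi
  have hzero (c) (hc : ∀ l ∈ T, restrictBlue l (interpolate c) = 0) : c = 0 := by
    funext i
    have hprod := hc i i.2
    rw [hrestrict, mul_eq_zero] at hprod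
    exact Subtype.ext (hprod.resolve_left (hh i).2.1)
  refine ⟨LinearMap.range interpolate, ?_, ?_, ?_⟩
  · rintro _ ⟨c, rfl⟩
    rw [happly]
    refine Submodule.sum_mem _ fun i _ => ?_
    rcases eq_or_ne (c i) 0 with hci | hci
    · simp [hci]
    · have hdeg : (c i : Polynomial K).natDegree < k :=
        (Polynomial.natDegree_lt_iff_degree_lt (by simpa using hci)).2
          (Polynomial.mem_degreeLT.1 (c i).2)
      rw [mem_restrictTotalDegree]
      have haeval := totalDegree_aeval_X_le (0 : Fin 3) (c i : Polynomial K)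
      have hi := (hh i).1
      exact (totalDegree_mul _ _).trans (by omega)
  · have hinj : Function.Injective interpolate :=
      (injective_iff_map_eq_zero interpolate).2 fun c hc => hzero c fun l _ => by simp [hc]
    rw [LinearMap.finrank_range_of_inj hinj, Module.finrank_pi_fintype]
    simp [(Polynomial.degreeLTEquiv K k).finrank_eq]
  · rintro _ ⟨c, rfl⟩ hc
    rw [hzero c hc, map_zero]

variable {F} in
theorem dvd_of_card_lt {G : MvPolynomial (Fin 3) K} (hF : Irreducible F) {b : ℕ}
    (hG : G.totalDegree ≤ b) {S : Finset (LineParam K)} (hSF : ∀ l ∈ S, restrictBlue l F = 0)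
    (hSG : ∀ l ∈ S, restrictBlue l G = 0) (hcard : F.totalDegree * b < #S) : F ∣ G := by
  by_contra hFG
  obtain ⟨T, hTS, hT⟩ := exists_subset_card_eq (Nat.succ_le_of_lt hcard)
  set a := F.totalDegree
  obtain ⟨q, hq⟩ : ∃ q, q = a * b := ⟨_, rfl⟩
  -- Any degree `n` much larger than `q ^ 2` makes the dimension count below contradictory.
  obtain ⟨n, hn⟩ : ∃ n, n = (q + 2) * (q + 2) := ⟨_, rfl⟩
  obtain ⟨k, hk⟩ : ∃ k, k + q = n + a + b + 1 := ⟨n + a + b + 1 - q, by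
    have : q ≤ n := by rw [hn]; nlinarith
    omega⟩
  obtain ⟨U, hU, hUrank, hUzero⟩ :=
    exists_submodule_of_lines T (k := k) (n := n + a + b) (by omega)
  have hcount := finrank_add_finrank_le_of_disjoint_ideal hF hFG hG n hU fun A B hAB =>
    hUzero _ hAB fun l hl => by simp [hSF l (hTS hl), hSG l (hTS hl)]
  have hdim := six_mul_finrank_restrictTotalDegree_fin_three K
  have hcubic : 6 * ((q + 1) * k) + ((n + b + 1) * (n + b + 2) * (n + b + 3) +
      (n + a + 1) * (n + a + 2) * (n + a + 3)) ≤
      (n + a + b + 1) * (n + a + b + 2) * (n + a + b + 3) + (n + 1) * (n + 2) * (n + 3) := by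
    rw [← hdim, ← hdim, ← hdim, ← hdim, hq, ← Nat.succ_eq_add_one, ← hT, ← hUrank]
    linarith
  have hquadratic : (q + 1) * k * 6 ≤ 3 * q * (2 * n + a + b) + 12 * q := by
    subst hq
    nlinarith
  have : (q + 1) * (k + q) * 6 = (q + 1) * (n + a + b + 1) * 6 := by rw [hk]
  nlinarith

end Lines

section Ruling

open MvPolynomial

variable {K : Type*} [Field K]

theorem card_filter_eval_eq_zero_le [DecidableEq K] {Q : Polynomial K} (hQ : Q ≠ 0)
    {N : Finset (LineParam K)} (hN : Set.InjOn LineParam.base (N : Set (LineParam K))) :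
    #{r ∈ N | Q.eval r.base = 0} ≤ Q.natDegree := by
  rw [← card_image_of_injOn (hN.mono (coe_subset.2 (filter_subset _ _)))]
  by_contra! hlt
  refine hQ (Polynomial.eq_zero_of_natDegree_lt_card_of_eval_eq_zero' Q _ ?_ hlt)
  simp only [mem_image, mem_filter]
  rintro _ ⟨r, ⟨-, hr⟩, rfl⟩
  exact hr

/-- The numerator of the curvature of the plane sections `y = const` of the surface `F = 0`. It
vanishes along every blue line contained in the surface. -/
noncomputable def sectionCurvature (F : MvPolynomial (Fin 3) K) : MvPolynomial (Fin 3) K :=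
  pderiv 0 (pderiv 0 F) * (pderiv 2 F) ^ 2 -
    C 2 * (pderiv 0 F * pderiv 2 F * pderiv 0 (pderiv 2 F)) +
    (pderiv 0 F) ^ 2 * pderiv 2 (pderiv 2 F)

theorem totalDegree_sectionCurvature_le (F : MvPolynomial (Fin 3) K) :
    (sectionCurvature F).totalDegree ≤ 3 * F.totalDegree := by
  have hfirst (i : Fin 3) : (pderiv i F).totalDegree ≤ F.totalDegree :=
    (totalDegree_pderiv_le i F).trans (Nat.sub_le _ _)
  have hsecond (i j : Fin 3) : (pderiv i (pderiv j F)).totalDegree ≤ F.totalDegree :=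
    (totalDegree_pderiv_le i _).trans ((Nat.sub_le _ _).trans (hfirst j))
  have hsq (i : Fin 3) : ((pderiv i F) ^ 2).totalDegree ≤ 2 * F.totalDegree :=
    (totalDegree_pow _ _).trans (Nat.mul_le_mul_left 2 (hfirst i))
  have hmul {P Q : MvPolynomial (Fin 3) K} {a b : ℕ} (hP : P.totalDegree ≤ a)
      (hQ : Q.totalDegree ≤ b) : (P * Q).totalDegree ≤ a + b :=
    (totalDegree_mul _ _).trans (Nat.add_le_add hP hQ)
  refine (totalDegree_add _ _).trans (max_le ((totalDegree_sub _ _).trans (max_le ?_ ?_)) ?_)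
  · exact (hmul (hsecond 0 0) (hsq 2)).trans (by omega)
  · exact (hmul (totalDegree_C 2).le
      (hmul (hmul (hfirst 0) (hfirst 2)) (hsecond 0 2))).trans (by omega)
  · exact (hmul (hsq 0) (hsecond 2 2)).trans (by omega)

variable {l r : LineParam K} {F : MvPolynomial (Fin 3) K}

theorem restrictBlue_pderiv_zero (h : restrictBlue l F = 0) :
    restrictBlue l (pderiv 0 F) = Polynomial.C l.slope * restrictBlue l (pderiv 2 F) := by
  have hderiv := derivative_restrictBlue l F
  rw [h, Polynomial.derivative_zero] at hderiv
  exact sub_eq_zero.1 hderiv.symm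

theorem restrictBlue_pderiv_zero_zero (h : restrictBlue l F = 0) :
    restrictBlue l (pderiv 0 (pderiv 0 F)) =
      2 * Polynomial.C l.slope * restrictBlue l (pderiv 0 (pderiv 2 F)) -
        Polynomial.C l.slope ^ 2 * restrictBlue l (pderiv 2 (pderiv 2 F)) := by
  have hderiv := congrArg Polynomial.derivative (restrictBlue_pderiv_zero h)
  rw [Polynomial.derivative_C_mul, derivative_restrictBlue, derivative_restrictBlue,
    pderiv_comm 2 0 F] at hderiv
  linear_combination hderiv

theorem restrictBlue_sectionCurvature (h : restrictBlue l F = 0) :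
    restrictBlue l (sectionCurvature F) = 0 := by
  simp only [sectionCurvature, map_add, map_sub, map_mul, map_pow, map_ofNat,
    restrictBlue_pderiv_zero_zero h, restrictBlue_pderiv_zero h]
  ring

-- On `l` the gradient of a multiple of `F` is proportional to that of `F`.
theorem restrictBlue_pderiv_mul_comm_of_dvd {G : MvPolynomial (Fin 3) K}
    (h : restrictBlue l F = 0) (hG : F ∣ G) (i j : Fin 3) :
    restrictBlue l (pderiv i F) * restrictBlue l (pderiv j G) =
      restrictBlue l (pderiv j F) * restrictBlue l (pderiv i G) := by
  obtain ⟨H, rfl⟩ := hG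
  simp only [pderiv_mul, map_add, map_mul, h]
  ring

-- The conclusion says `(f / g)'' = 0`: the tangent planes along `l` turn at a constant rate.
theorem second_derivative_of_dvd_sectionCurvature (h : restrictBlue l F = 0)
    (hdvd : F ∣ sectionCurvature F) {f g : Polynomial K} (hf : restrictBlue l (pderiv 1 F) = f)
    (hg : restrictBlue l (pderiv 2 F) = g) (hg0 : g ≠ 0) :
    g * (f.derivative.derivative * g - f * g.derivative.derivative) =
      2 * g.derivative * (f.derivative * g - f * g.derivative) := by
  have hcomm := pderiv_comm (σ := Fin 3) (R := K)
  have hgrad := restrictBlue_pderiv_mul_comm_of_dvd h hdvd 1 2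
  simp only [sectionCurvature, map_add, map_sub, pderiv_mul, pow_two, pderiv_C, zero_mul,
    zero_add, hcomm 1 0, hcomm 1 2, hcomm 2 0] at hgrad
  simp only [map_add, map_mul, map_ofNat, restrictBlue_pderiv_zero_zero h,
    restrictBlue_pderiv_zero h] at hgrad
  subst hf hg
  refine mul_left_cancel₀ hg0 ?_
  simp only [derivative_restrictBlue, Polynomial.derivative_sub, Polynomial.derivative_C_mul,
    hcomm 2 0]
  linear_combination -hgrad

theorem exists_eq_affine_mul {p : ℕ} [CharP K p] {f g : Polynomial K} {e : ℕ}
    (hf : f.natDegree < e) (hg : g.natDegree < e) (hp : 2 * e < p) (hg0 : g ≠ 0)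
    (h : g * (f.derivative.derivative * g - f * g.derivative.derivative) =
      2 * g.derivative * (f.derivative * g - f * g.derivative)) :
    ∃ a b : K, f = (Polynomial.C a * Polynomial.X + Polynomial.C b) * g := by
  have hf' := Polynomial.natDegree_derivative_le f
  have hg' := Polynomial.natDegree_derivative_le g
  obtain ⟨a, ha⟩ := exists_eq_C_mul_of_wronskian_eq_zero (p := p) (f := g * g)
    (g := f.derivative * g - f * g.derivative) (mul_ne_zero hg0 hg0)
    (Polynomial.natDegree_mul_le.trans_lt (by omega))
    ((Polynomial.natDegree_sub_le_of_le Polynomial.natDegree_mul_le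
      Polynomial.natDegree_mul_le).trans_lt (by omega))
    (by
      simp only [Polynomial.wronskian, Polynomial.derivative_sub, Polynomial.derivative_mul]
      linear_combination g * h)
  have hX : (Polynomial.C a * Polynomial.X).natDegree ≤ 1 := by compute_degree
  obtain ⟨b, hb⟩ := exists_eq_C_mul_of_wronskian_eq_zero (p := p) (f := g)
    (g := f - Polynomial.C a * Polynomial.X * g) hg0 (by omega)
    ((Polynomial.natDegree_sub_le_of_le le_rfl
      (Polynomial.natDegree_mul_le_of_le hX le_rfl)).trans_lt (by omega))
    (by
      simp only [Polynomial.wronskian, Polynomial.derivative_sub, Polynomial.derivative_mul,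
        Polynomial.derivative_C, Polynomial.derivative_X]
      linear_combination ha)
  exact ⟨a, b, by linear_combination hb⟩

theorem Meets.eval_pderiv_one (h : Meets l r) (hr : restrictRed r F = 0) :
    (restrictBlue l (pderiv 1 F)).eval r.base =
      r.slope * (restrictBlue l (pderiv 2 F)).eval r.base := by
  have hderiv := congrArg (Polynomial.eval l.base) (derivative_restrictRed r F)
  rw [hr, Polynomial.derivative_zero, Polynomial.eval_zero, Polynomial.eval_sub,
    Polynomial.eval_mul, Polynomial.eval_C, h.eval_restrictRed, h.eval_restrictRed] at hderiv
  exact sub_eq_zero.1 hderiv.symm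

instance [DecidableEq K] : Decidable (Meets l r) :=
  inferInstanceAs (Decidable (_ = _))

theorem totalDegree_pos_of_irreducible {σ : Type*} {F : MvPolynomial σ K} (hF : Irreducible F) :
    0 < F.totalDegree := by
  refine Nat.pos_of_ne_zero fun h0 => hF.not_isUnit ?_
  exact isUnit_iff_totalDegree_of_isReduced.2 ⟨isUnit_iff_ne_zero.2 fun hc => hF.ne_zero <| by
    rw [totalDegree_eq_zero_iff_eq_C.1 h0, hc, C_0], h0⟩

theorem pderiv_eq_zero_of_card_lt {S : Finset (LineParam K)} (hF : Irreducible F)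
    (hS : ∀ l ∈ S, restrictBlue l F = 0) (hcard : F.totalDegree * F.totalDegree < #S) {i : Fin 3}
    (hi : ∀ l ∈ S, restrictBlue l (pderiv i F) = 0) : pderiv i F = 0 := by
  have hdeg := totalDegree_pderiv_le i F
  have hpos := totalDegree_pos_of_irreducible hF
  by_contra h0
  have := totalDegree_le_of_dvd_of_isDomain (dvd_of_card_lt hF (by omega) hS hi hcard) h0
  omega

theorem pderiv_two_ne_zero [DecidableEq K] {p : ℕ} [CharP K p] {S R : Finset (LineParam K)}
    (hF : Irreducible F) (hp : F.totalDegree < p) (hS : ∀ l ∈ S, restrictBlue l F = 0)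
    (hcard : F.totalDegree * F.totalDegree < #S) (hR : ∀ r ∈ R, restrictRed r F = 0)
    (hinj : ∀ l ∈ S, Set.InjOn LineParam.base ({r ∈ R | Meets l r} : Set (LineParam K)))
    (hmeet : ∀ l ∈ S, F.totalDegree ≤ #{r ∈ R | Meets l r}) : pderiv 2 F ≠ 0 := by
  intro h2
  have h0 : pderiv 0 F = 0 := pderiv_eq_zero_of_card_lt hF hS hcard fun l hl => by
    rw [restrictBlue_pderiv_zero (hS l hl), h2, map_zero, mul_zero]
  have h1 : pderiv 1 F = 0 := pderiv_eq_zero_of_card_lt hF hS hcard fun l hl => by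
    by_contra hne
    have hroots : ∀ r ∈ {r ∈ R | Meets l r}, (restrictBlue l (pderiv 1 F)).eval r.base = 0 := by
      intro r hr
      obtain ⟨hrR, hlr⟩ := mem_filter.1 hr
      rw [hlr.eval_pderiv_one (hR r hrR), h2, map_zero, Polynomial.eval_zero, mul_zero]
    have hle := card_filter_eval_eq_zero_le (N := {r ∈ R | Meets l r}) hne
      (by simpa using hinj l hl)
    rw [filter_true_of_mem hroots] at hle
    have hdeg := (natDegree_restrictBlue_le l _).trans (totalDegree_pderiv_le 1 F)
    have hl := hmeet l hl
    have hpos := totalDegree_pos_of_irreducible hF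
    omega
  refine (totalDegree_pos_of_irreducible hF).ne' (totalDegree_eq_zero_of_pderiv_eq_zero hp ?_)
  rw [Fin.forall_fin_succ, Fin.forall_fin_two]
  exact ⟨h0, h1, h2⟩

theorem exists_card_affine_slope_gt [DecidableEq K] {p k : ℕ} [CharP K p]
    {S R : Finset (LineParam K)} (hF : Irreducible F) (hp : 2 * F.totalDegree < p)
    (hS : ∀ l ∈ S, restrictBlue l F = 0) (hcard : 3 * F.totalDegree * F.totalDegree < #S)
    (hR : ∀ r ∈ R, restrictRed r F = 0)
    (hinj : ∀ l ∈ S, Set.InjOn LineParam.base ({r ∈ R | Meets l r} : Set (LineParam K)))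
    (hmeet : ∀ l ∈ S, F.totalDegree + k ≤ #{r ∈ R | Meets l r}) :
    ∃ l ∈ S, ∃ a b : K, k < #{r ∈ R | Meets l r ∧ r.slope = a * r.base + b} := by
  have hpos := totalDegree_pos_of_irreducible hF
  have hcard' : F.totalDegree * F.totalDegree < #S := by nlinarith
  have h2 := pderiv_two_ne_zero hF (by omega) hS hcard' hR hinj
    fun l hl => le_self_add.trans (hmeet l hl)
  have hdvd : F ∣ sectionCurvature F :=
    dvd_of_card_lt hF (totalDegree_sectionCurvature_le F) hS
      (fun l hl => restrictBlue_sectionCurvature (hS l hl)) (by linarith)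
  obtain ⟨l, hl, hg0⟩ : ∃ l ∈ S, restrictBlue l (pderiv 2 F) ≠ 0 := by
    by_contra! hall
    exact h2 (pderiv_eq_zero_of_card_lt hF hS hcard' hall)
  have hdeg (i : Fin 3) : (restrictBlue l (pderiv i F)).natDegree < F.totalDegree :=
    ((natDegree_restrictBlue_le l _).trans (totalDegree_pderiv_le i F)).trans_lt (by omega)
  obtain ⟨a, b, hab⟩ := exists_eq_affine_mul (hdeg 1) (hdeg 2) hp hg0
    (second_derivative_of_dvd_sectionCurvature (hS l hl) hdvd rfl rfl hg0)
  refine ⟨l, hl, a, b, ?_⟩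
  have hsub : {r ∈ {r ∈ R | Meets l r} | ¬(restrictBlue l (pderiv 2 F)).eval r.base = 0} ⊆
      {r ∈ R | Meets l r ∧ r.slope = a * r.base + b} := by
    simp only [subset_iff, mem_filter]
    rintro r ⟨⟨hr, hlr⟩, hne⟩
    refine ⟨hr, hlr, mul_right_cancel₀ hne ?_⟩
    rw [← hlr.eval_pderiv_one (hR r hr), hab]
    simp
  have hsplit := card_filter_add_card_filter_not (s := {r ∈ R | Meets l r})
    fun r => (restrictBlue l (pderiv 2 F)).eval r.base = 0
  have hzeros := card_filter_eval_eq_zero_le (N := {r ∈ R | Meets l r}) hg0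
    (by simpa using hinj l hl)
  have := hmeet l hl
  have := hdeg 2
  have := card_le_card hsub
  omega

end Ruling

section LineTheorem

open MvPolynomial

variable {K : Type*} [Field K] [DecidableEq K]

open scoped Classical in
theorem card_filter_restrictBlue_eq_zero_le {F : MvPolynomial (Fin 3) K} (hF : F ≠ 0)
    {S : Finset (LineParam K)} {c : ℕ}
    (hirr : ∀ Q, Irreducible Q → Q ∣ F → #{l ∈ S | restrictBlue l Q = 0} ≤ c * Q.totalDegree) :
    #{l ∈ S | restrictBlue l F = 0} ≤ c * F.totalDegree := by
  induction F using WfDvdMonoid.induction_on_irreducible with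
  | zero => exact absurd rfl hF
  | unit u hu =>
    have hne (l : LineParam K) : restrictBlue l u ≠ 0 := (hu.map (restrictBlue l)).ne_zero
    simp [hne]
  | mul F Q hF0 hQ ih =>
    have hcover : ({l ∈ S | restrictBlue l (Q * F) = 0} : Finset _) =
        {l ∈ S | restrictBlue l Q = 0} ∪ {l ∈ S | restrictBlue l F = 0} := by
      simp only [map_mul, mul_eq_zero, filter_or]
    rw [hcover, totalDegree_mul_of_isDomain hQ.ne_zero hF0, mul_add]
    exact (card_union_le _ _).trans (add_le_add (hirr Q hQ (dvd_mul_right Q F))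
      (ih hF0 fun P hP hPF => hirr P hP (hPF.mul_left Q)))

open scoped Classical in
theorem card_filter_meets_le_add_totalDegree {F H : MvPolynomial (Fin 3) K} {j : ℕ}
    {R : Finset (LineParam K)} {l : LineParam K} (hR : ∀ r ∈ R, restrictRed r (F ^ j * H) = 0)
    (hinj : Set.InjOn LineParam.base ({r ∈ R | Meets l r} : Set (LineParam K)))
    (hH : restrictBlue l H ≠ 0) :
    #{r ∈ R | Meets l r} ≤
      #{r ∈ {r ∈ R | restrictRed r F = 0} | Meets l r} + H.totalDegree := by
  have hcover : ({r ∈ R | Meets l r} : Finset _) ⊆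
      {r ∈ {r ∈ R | restrictRed r F = 0} | Meets l r} ∪
        {r ∈ {r ∈ R | Meets l r} | (restrictBlue l H).eval r.base = 0} := by
    intro r hr
    obtain ⟨hrR, hlr⟩ := mem_filter.1 hr
    have hprod := hR r hrR
    rw [map_mul, map_pow, mul_eq_zero] at hprod
    rcases hprod with hF | hH
    · exact mem_union_left _ (by simp [hrR, hlr, eq_zero_of_pow_eq_zero hF])
    · exact mem_union_right _ (mem_filter.2 ⟨hr, by simp [← hlr.eval_restrictRed, hH]⟩)
  calc #{r ∈ R | Meets l r} ≤ _ := (card_le_card hcover).trans (card_union_le _ _)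
    _ ≤ _ := by
      gcongr
      exact (card_filter_eval_eq_zero_le hH (by simpa only [coe_filter] using hinj)).trans
        (natDegree_restrictBlue_le l H)

theorem restrictBlue_eq_zero_of_card_lt {F : MvPolynomial (Fin 3) K} {R : Finset (LineParam K)}
    {l : LineParam K} (hR : ∀ r ∈ R, restrictRed r F = 0)
    (hinj : Set.InjOn LineParam.base ({r ∈ R | Meets l r} : Set (LineParam K)))
    (hcard : F.totalDegree < #{r ∈ R | Meets l r}) : restrictBlue l F = 0 := by
  by_contra hne
  have hzeros := card_filter_eval_eq_zero_le (N := {r ∈ R | Meets l r}) hne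
    (by simpa only [coe_filter] using hinj)
  rw [filter_true_of_mem] at hzeros
  · have := natDegree_restrictBlue_le l F
    omega
  · intro r hr
    obtain ⟨hrR, hlr⟩ := mem_filter.1 hr
    rw [← hlr.eval_restrictRed, hR r hrR, Polynomial.eval_zero]

open scoped Classical in
theorem exists_irreducible_factor_card_lt {F : MvPolynomial (Fin 3) K} (hF : F ≠ 0) {d : ℕ}
    (hd : F.totalDegree ≤ d) {B : Finset (LineParam K)} (hB : ∀ l ∈ B, restrictBlue l F = 0)
    {c : ℕ} (hcard : c * d < #B) :
    ∃ Q, Irreducible Q ∧ Q ∣ F ∧ c * Q.totalDegree < #{l ∈ B | restrictBlue l Q = 0} := by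
  by_contra! hcon
  have hle := card_filter_restrictBlue_eq_zero_le hF hcon
  rw [filter_true_of_mem hB] at hle
  nlinarith

-- A blue line on which two distinct factors of `F` vanish is rare, and on any other blue line of
-- the richest factor `Q` all but `d` of the red lines met lie in the zero set of `Q`.
theorem exists_card_affine_slope_gt_of_rich {p d k : ℕ} [CharP K p] {R B : Finset (LineParam K)}
    (hRd : 6 * #R < (d + 2) * (d + 3)) (hBd : 4 * d * d < #B) (hp : 2 * d < p) (hk : 0 < k)
    (hinj : ∀ l ∈ B, Set.InjOn LineParam.base ({r ∈ R | Meets l r} : Set (LineParam K)))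
    (hmeet : ∀ l ∈ B, 2 * d + k ≤ #{r ∈ R | Meets l r}) :
    ∃ l ∈ B, ∃ a b, k < #{r ∈ R | Meets l r ∧ r.slope = a * r.base + b} := by
  classical
  obtain ⟨F, hF0, hFd, hFR⟩ := exists_restrictRed_eq_zero R d hRd
  have hFB : ∀ l ∈ B, restrictBlue l F = 0 := fun l hl =>
    restrictBlue_eq_zero_of_card_lt hFR (hinj l hl) (by have := hmeet l hl; omega)
  obtain ⟨Q, hQ, hQF, hQcard⟩ := exists_irreducible_factor_card_lt hF0 hFd hFB hBd
  obtain ⟨H, hFQH, hQH⟩ :=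
    (FiniteMultiplicity.of_not_isUnit hQ.not_isUnit hF0).exists_eq_pow_mul_and_not_dvd
  have hQd : Q.totalDegree ≤ d := (totalDegree_le_of_dvd_of_isDomain hQF hF0).trans hFd
  have hHd : H.totalDegree ≤ d :=
    (totalDegree_le_of_dvd_of_isDomain ⟨_, hFQH.trans (mul_comm _ _)⟩ hF0).trans hFd
  obtain ⟨T, hT⟩ : ∃ T, T = ({l ∈ B | restrictBlue l Q = 0} : Finset _) := ⟨_, rfl⟩
  have hTQ : ∀ l ∈ T, restrictBlue l Q = 0 := by simp [hT]
  have hTB : T ⊆ B := hT ▸ filter_subset _ _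
  have hTH : #{l ∈ T | restrictBlue l H = 0} ≤ Q.totalDegree * d := by
    by_contra! hlt
    exact hQH (dvd_of_card_lt hQ hHd (fun l hl => hTQ l (mem_filter.1 hl).1)
      (fun l hl => (mem_filter.1 hl).2) hlt)
  have hS : 3 * Q.totalDegree * Q.totalDegree < #{l ∈ T | ¬restrictBlue l H = 0} := by
    have := card_filter_add_card_filter_not (s := T) (fun l => restrictBlue l H = 0)
    rw [← hT] at hQcard
    nlinarith
  have hmeetQ : ∀ l ∈ ({l ∈ T | ¬restrictBlue l H = 0} : Finset _),
      Q.totalDegree + k ≤ #{r ∈ {r ∈ R | restrictRed r Q = 0} | Meets l r} := by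
    intro l hl
    obtain ⟨hlT, hlH⟩ := mem_filter.1 hl
    have := card_filter_meets_le_add_totalDegree (fun r hr => hFQH ▸ hFR r hr)
      (hinj l (hTB hlT)) hlH
    have := hmeet l (hTB hlT)
    omega
  obtain ⟨l, hl, a, b, hlab⟩ := exists_card_affine_slope_gt hQ (by omega)
    (fun l hl => hTQ l (mem_filter.1 hl).1) hS (fun r hr => (mem_filter.1 hr).2)
    (fun l hl => (hinj l (hTB (mem_filter.1 hl).1)).mono fun r hr => by
      exact ⟨(mem_filter.1 hr.1).1, hr.2⟩) hmeetQ
  exact ⟨l, hTB (mem_filter.1 hl).1, a, b, hlab.trans_le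
    (card_le_card (filter_subset_filter _ (filter_subset _ _)))⟩

end LineTheorem

section Incident

variable {F : Type*} [Field F]

/-- The point `P` of three-space lies on the plane `z = π.2.1 * x - π.1 * y + π.2.2` with
parameters `π`. -/
def Incident (P π : F × F × F) : Prop :=
  P.2.2 = π.2.1 * P.1 - π.1 * P.2.1 + π.2.2

instance [DecidableEq F] (P π : F × F × F) : Decidable (Incident P π) :=
  inferInstanceAs (Decidable (_ = _))

/-- No plane of `B` contains more than `k` points of `R` on a line. Planes are graphs over the
`x`-`y` plane, so the lines in them are cut out by equations `α * x + β * y = γ`. -/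
def CollinearAtMost [DecidableEq F] (R B : Finset (F × F × F)) (k : ℕ) : Prop :=
  ∀ π ∈ B, ∀ α β γ : F, (α ≠ 0 ∨ β ≠ 0) →
    #{P ∈ R | Incident P π ∧ α * P.1 + β * P.2.1 = γ} ≤ k

theorem CollinearAtMost.mono [DecidableEq F] {R R' B B' : Finset (F × F × F)} {k : ℕ}
    (h : CollinearAtMost R B k) (hR : R' ⊆ R) (hB : B' ⊆ B) : CollinearAtMost R' B' k :=
  fun π hπ α β γ hαβ =>
    (card_le_card (filter_subset_filter _ hR)).trans (h π (hB hπ) α β γ hαβ)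

variable {K : Type*} [Field K] [Algebra F K] (v : K)

/-- The line of three-space over an extension `K` of `F` attached to a point or plane with
coordinates in `F`. It depends on a parameter `v : K`; for `v` outside `F`, planes and points
become blue and red lines, incidence becomes intersection, and the base of a red line determines
both coordinates `x` and `y` of the point. -/
def lineOfTriple (P : F × F × F) : LineParam K where
  base := algebraMap F K P.2.1 + v * algebraMap F K P.1
  height := algebraMap F K P.2.2
  slope := algebraMap F K P.1

theorem lineOfTriple_injective : Function.Injective (lineOfTriple (F := F) v) := by
  intro P Q h
  obtain ⟨hbase, hheight, hslope⟩ := LineParam.ext_iff.1 h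
  simp only [lineOfTriple] at hbase hheight hslope
  rw [hslope, add_left_inj] at hbase
  have hinj := (algebraMap F K).injective
  exact Prod.ext (hinj hslope) (Prod.ext (hinj hbase) (hinj hheight))

theorem meets_lineOfTriple_iff (P π : F × F × F) :
    Meets (lineOfTriple v π) (lineOfTriple v P) ↔ Incident P π := by
  rw [Incident, ← (algebraMap F K).injective.eq_iff, Meets]
  simp only [lineOfTriple, map_add, map_sub, map_mul]
  constructor <;> intro h <;> linear_combination h

variable {v} in
theorem eq_and_eq_of_base_lineOfTriple_eq (hv : v ∉ Set.range (algebraMap F K)) {P Q : F × F × F}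
    (h : (lineOfTriple v P).base = (lineOfTriple v Q).base) : P.1 = Q.1 ∧ P.2.1 = Q.2.1 := by
  have hinj := (algebraMap F K).injective
  simp only [lineOfTriple] at h
  have hx : P.1 = Q.1 := by
    by_contra hne
    have hsub : algebraMap F K P.1 - algebraMap F K Q.1 ≠ 0 := sub_ne_zero.2 fun h => hne (hinj h)
    refine hv ⟨(Q.2.1 - P.2.1) / (P.1 - Q.1), ?_⟩
    rw [map_div₀, map_sub, map_sub, div_eq_iff hsub]
    linear_combination -h
  rw [hx, add_left_inj] at h
  exact ⟨hx, hinj h⟩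

theorem Incident.eq_of_eq_of_eq {P Q π : F × F × F} (hP : Incident P π) (hQ : Incident Q π)
    (hx : P.1 = Q.1) (hy : P.2.1 = Q.2.1) : P = Q := by
  rw [Incident] at hP hQ
  exact Prod.ext hx (Prod.ext hy (by rw [hP, hQ, hx, hy]))

variable {v} in
theorem injOn_base_lineOfTriple [DecidableEq K] (hv : v ∉ Set.range (algebraMap F K))
    (R : Finset (F × F × F)) (π : F × F × F) :
    Set.InjOn LineParam.base
      ({r ∈ R.image (lineOfTriple v) | Meets (lineOfTriple v π) r} : Set (LineParam K)) := by
  rintro r ⟨hr, hrπ⟩ s ⟨hs, hsπ⟩ hrs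
  obtain ⟨P, -, rfl⟩ := mem_image.1 (mem_coe.1 hr)
  obtain ⟨Q, -, rfl⟩ := mem_image.1 (mem_coe.1 hs)
  obtain ⟨hx, hy⟩ := eq_and_eq_of_base_lineOfTriple_eq hv hrs
  rw [((meets_lineOfTriple_iff v P π).1 hrπ).eq_of_eq_of_eq
    ((meets_lineOfTriple_iff v Q π).1 hsπ) hx hy]

theorem collinear_of_slope_eq_affine {a b : K} {P P₁ P₂ : F × F × F}
    (h : ∀ Q ∈ [P, P₁, P₂], (lineOfTriple v Q).slope = a * (lineOfTriple v Q).base + b) :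
    (P₂.2.1 - P₁.2.1) * P.1 + -(P₂.1 - P₁.1) * P.2.1 =
      (P₂.2.1 - P₁.2.1) * P₁.1 + -(P₂.1 - P₁.1) * P₁.2.1 := by
  have hP := h P (by simp)
  have hP₁ := h P₁ (by simp)
  have hP₂ := h P₂ (by simp)
  simp only [lineOfTriple] at hP hP₁ hP₂
  have hcoeff : a ≠ 0 ∨ 1 - a * v ≠ 0 := by
    by_contra! hzero
    simp [hzero.1] at hzero
  apply (algebraMap F K).injective
  simp only [map_add, map_mul, map_sub, map_neg]
  rcases hcoeff with ha | ha <;> apply mul_left_cancel₀ ha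
  · linear_combination (algebraMap F K P₂.1 - algebraMap F K P₁.1) * (hP - hP₁)
      - (algebraMap F K P.1 - algebraMap F K P₁.1) * (hP₂ - hP₁)
  · linear_combination (algebraMap F K P₂.2.1 - algebraMap F K P₁.2.1) * (hP - hP₁)
      - (algebraMap F K P.2.1 - algebraMap F K P₁.2.1) * (hP₂ - hP₁)

theorem CollinearAtMost.card_affine_slope_le [DecidableEq F] [DecidableEq K]
    {R B : Finset (F × F × F)} {k : ℕ} (h : CollinearAtMost R B k) (hk : 1 ≤ k) {π : F × F × F}
    (hπ : π ∈ B) (a b : K) :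
    #{P ∈ R | Incident P π ∧ (lineOfTriple v P).slope = a * (lineOfTriple v P).base + b} ≤ k := by
  by_contra! hlt
  obtain ⟨P₁, hP₁, P₂, hP₂, hne⟩ := one_lt_card.1 (hk.trans_lt hlt)
  rw [mem_filter] at hP₁ hP₂
  have hαβ : P₂.2.1 - P₁.2.1 ≠ 0 ∨ -(P₂.1 - P₁.1) ≠ 0 := by
    by_contra! hzero
    rw [neg_eq_zero, sub_eq_zero, sub_eq_zero] at hzero
    exact hne (hP₁.2.1.eq_of_eq_of_eq hP₂.2.1 hzero.2.symm hzero.1.symm)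
  refine (hlt.trans_le (card_le_card fun P hP => ?_)).not_ge (h π hπ _ _
    ((P₂.2.1 - P₁.2.1) * P₁.1 + -(P₂.1 - P₁.1) * P₁.2.1) hαβ)
  rw [mem_filter] at hP ⊢
  exact ⟨hP.1, hP.2.1, collinear_of_slope_eq_affine v (a := a) (b := b)
    (by simp [hP.2.2, hP₁.2.2, hP₂.2.2])⟩

theorem card_image_lineOfTriple_filter [DecidableEq K] (R : Finset (F × F × F))
    (q : LineParam K → Prop) [DecidablePred q] :
    #{r ∈ R.image (lineOfTriple v) | q r} = #{P ∈ R | q (lineOfTriple v P)} := by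
  rw [filter_image, card_image_of_injective _ (lineOfTriple_injective v)]

theorem exists_card_incident_lt [DecidableEq F] {p d k : ℕ} [CharP F p]
    {R B : Finset (F × F × F)} (hRd : 6 * #R < (d + 2) * (d + 3)) (hBd : 4 * d * d < #B)
    (hp : 2 * d < p) (hk : 1 ≤ k) (hRB : CollinearAtMost R B k) :
    ∃ π ∈ B, #{P ∈ R | Incident P π} < 2 * d + k := by
  classical
  by_contra! hrich
  let v : RatFunc F := RatFunc.X
  have hv : v ∉ Set.range (algebraMap F (RatFunc F)) := by
    rintro ⟨c, hc⟩
    have hdeg := congrArg RatFunc.intDegree hc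
    rw [RatFunc.algebraMap_eq_C, RatFunc.intDegree_C, RatFunc.intDegree_X] at hdeg
    exact zero_ne_one hdeg
  have : CharP (RatFunc F) p :=
    charP_of_injective_algebraMap (algebraMap F (RatFunc F)).injective p
  have hinj := lineOfTriple_injective (F := F) v
  obtain ⟨l, hl, a, b, hlab⟩ := exists_card_affine_slope_gt_of_rich (p := p) (k := k)
    (R := R.image (lineOfTriple v)) (B := B.image (lineOfTriple v))
    (by rwa [card_image_of_injective _ hinj]) (by rwa [card_image_of_injective _ hinj]) hp hk
    (forall_mem_image.2 fun π _ => injOn_base_lineOfTriple hv R π)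
    (forall_mem_image.2 fun π hπ => by
      simpa only [card_image_lineOfTriple_filter, meets_lineOfTriple_iff] using hrich π hπ)
  obtain ⟨π, hπ, rfl⟩ := mem_image.1 hl
  simp only [card_image_lineOfTriple_filter, meets_lineOfTriple_iff] at hlab
  exact hlab.not_ge (hRB.card_affine_slope_le v hk hπ a b)

end Incident

section IncidenceBound

theorem exists_subset_card_le_sum_le {α : Type*} (f : α → ℕ) {m g : ℕ}
    {R : Finset α} (hR : #R ≤ g * m) :
    ∃ R' ⊆ R, #R' ≤ m ∧ ∑ x ∈ R, f x ≤ g * ∑ x ∈ R', f x := by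
  classical
  induction g generalizing R with
  | zero => exact ⟨R, subset_rfl, by omega, by simp_all⟩
  | succ g ih =>
    rcases le_or_gt (#R) m with hm | hm
    · exact ⟨R, subset_rfl, hm, Nat.le_mul_of_pos_left _ g.succ_pos⟩
    obtain ⟨R₁, hR₁, hcard₁⟩ := exists_subset_card_eq hm.le
    have hsum := sum_sdiff hR₁ (f := f)
    have hcard := card_sdiff_add_card_eq_card hR₁
    obtain ⟨R₂, hR₂, hcard₂, hsum₂⟩ := ih (R := R \ R₁) (by rw [add_one_mul] at hR; omega)
    rcases le_total (∑ x ∈ R₂, f x) (∑ x ∈ R₁, f x) with hle | hle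
    · exact ⟨R₁, hR₁, hcard₁.le, by nlinarith⟩
    · exact ⟨R₂, hR₂.trans sdiff_subset, hcard₂, by nlinarith⟩

variable {F : Type*} [Field F] [DecidableEq F]

/-- The number of incidences between the points `R` and the planes `B`. -/
def incidences (R B : Finset (F × F × F)) : ℕ :=
  ∑ π ∈ B, #{P ∈ R | Incident P π}

theorem incidences_eq_sum_points (R B : Finset (F × F × F)) :
    incidences R B = ∑ P ∈ R, #{π ∈ B | Incident P π} := by
  simp only [incidences, card_filter]
  exact sum_comm

theorem incidences_le_card_mul_card (R B : Finset (F × F × F)) :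
    incidences R B ≤ #B * #R := by
  rw [incidences, ← smul_eq_mul]
  exact sum_le_card_nsmul _ _ _ fun π _ => card_filter_le _ _

theorem incidences_le_add_mul_card (R B : Finset (F × F × F)) (m : ℕ) :
    incidences R B ≤ incidences R {π ∈ B | m ≤ #{P ∈ R | Incident P π}} + m * #B := by
  simp only [incidences]
  rw [← sum_filter_add_sum_filter_not B (fun π => m ≤ #{P ∈ R | Incident P π})]
  gcongr
  calc _ ≤ #{π ∈ B | ¬m ≤ #{P ∈ R | Incident P π}} • m :=
        sum_le_card_nsmul _ _ _ fun π hπ => (not_le.1 (mem_filter.1 hπ).2).le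
    _ ≤ m * #B := by
        rw [smul_eq_mul, mul_comm]
        gcongr
        exact filter_subset _ _

theorem exists_degree {g M p : ℝ} (hg : 10 ^ 7 ≤ g) (hgM : g ≤ M) (hp : 0 ≤ p)
    (hMp : M ≤ p ^ 2 / 1000) : ∃ d : ℕ, 12 * (M / g) ≤ (d : ℝ) * d ∧
      4 * (d : ℝ) * d ≤ 100 * (M / g) ∧ 2 * (d : ℝ) ≤ 4 * √M ∧ 2 * (d : ℝ) < p := by
  obtain ⟨x, hx⟩ : ∃ x, x = M / g := ⟨_, rfl⟩
  have hxg : x * g = M := by rw [hx]; field_simp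
  have hx1 : 1 ≤ x := by rw [hx, le_div_iff₀ (by linarith)]; linarith
  have hr0 : 0 ≤ √(12 * x) := Real.sqrt_nonneg _
  have hr2 := Real.mul_self_sqrt (show 0 ≤ 12 * x by linarith)
  have hrM : √(12 * x) ≤ √M := Real.sqrt_le_sqrt (by nlinarith)
  rw [← hx]
  set r := √(12 * x)
  have hr3 : 3 ≤ r := by nlinarith
  have hrp : r ≤ p / 100 := by nlinarith [mul_nonneg hr0 hp]
  have hceil := Nat.le_ceil r
  have hceil' := Nat.ceil_lt_add_one hr0
  exact ⟨⌈r⌉₊, by nlinarith, by nlinarith, by linarith, by linarith⟩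

-- Keep the best of `g` equal portions of `R`, then only the planes that are rich in that portion.
theorem exists_incidences_le_mul {p : ℕ} [CharP F p] {R B : Finset (F × F × F)} {M : ℝ}
    {g k : ℕ} (hg : 10 ^ 7 ≤ (g : ℝ)) (hgM : g ≤ M) (hR : #R ≤ M) (hB : #B ≤ M)
    (hMp : M ≤ (p : ℝ) ^ 2 / 1000) (hk : 1 ≤ k) (hRB : CollinearAtMost R B k) :
    ∃ R' ⊆ R, ∃ B' ⊆ B, #R' ≤ 100 * (M / g) ∧ #B' ≤ 100 * (M / g) ∧
      incidences R B ≤ g * (incidences R' B' + (4 * √M + k) * M) := by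
  obtain ⟨d, hdR, hdB, hdM, hdp⟩ := exists_degree hg hgM (Nat.cast_nonneg p) hMp
  have hMg : 1 ≤ M / g := by rw [le_div_iff₀ (by linarith)]; linarith
  have hceil := Nat.le_ceil (M / g)
  obtain ⟨R', hR'R, hR'card, hR'sum⟩ := exists_subset_card_le_sum_le
    (fun P => #{π ∈ B | Incident P π}) (m := ⌈M / g⌉₊) (g := g) (R := R) (by
      rw [← Nat.cast_le (α := ℝ), Nat.cast_mul]
      calc (#R : ℝ) ≤ g * (M / g) := by rwa [mul_div_cancel₀ _ (by linarith)]
        _ ≤ g * ⌈M / g⌉₊ := by gcongr)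
  rw [← incidences_eq_sum_points, ← incidences_eq_sum_points] at hR'sum
  have hR'2 : (#R' : ℝ) ≤ 2 * (M / g) := by
    have hcast : (#R' : ℝ) ≤ ⌈M / g⌉₊ := by exact_mod_cast hR'card
    linarith [Nat.ceil_lt_add_one (show 0 ≤ M / g by linarith)]
  let B' : Finset (F × F × F) := {π ∈ B | 2 * d + k ≤ #{P ∈ R' | Incident P π}}
  have hB'B : B' ⊆ B := filter_subset _ _
  have hB'card : #B' ≤ 4 * d * d := by
    by_contra! hlt
    have hdegree : 6 * #R' < (d + 2) * (d + 3) := by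
      rw [← Nat.cast_lt (α := ℝ)]
      push_cast
      nlinarith
    obtain ⟨π, hπ, hpoor⟩ := exists_card_incident_lt hdegree hlt (by exact_mod_cast hdp) hk
      (hRB.mono hR'R hB'B)
    exact hpoor.not_ge (mem_filter.1 hπ).2
  refine ⟨R', hR'R, B', hB'B, by linarith, le_trans (by exact_mod_cast hB'card) hdB, ?_⟩
  calc (incidences R B : ℝ) ≤ g * incidences R' B := by exact_mod_cast hR'sum
    _ ≤ g * (incidences R' B' + (2 * d + k) * #B) := by
        gcongr
        exact_mod_cast incidences_le_add_mul_card R' B (2 * d + k)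
    _ ≤ g * (incidences R' B' + (4 * √M + k) * M) := by gcongr

theorem mul_rpow_div_le_half {g M ε c : ℝ} (hg : 0 < g) (hM : 0 ≤ M) (hc : 0 ≤ c)
    (hgε : 2 * c ^ (1 + ε) ≤ g ^ ε) :
    g * (c * (M / g)) ^ (1 + ε) ≤ M ^ (1 + ε) / 2 := by
  have hgpow : 0 < g ^ ε := by positivity
  rw [Real.mul_rpow hc (by positivity), Real.div_rpow hM hg.le, Real.rpow_add hg, Real.rpow_one]
  calc g * (c ^ (1 + ε) * (M ^ (1 + ε) / (g * g ^ ε)))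
      = M ^ (1 + ε) * (c ^ (1 + ε) / g ^ ε) := by field_simp
    _ ≤ M ^ (1 + ε) * (1 / 2) := by
        refine mul_le_mul_of_nonneg_left ?_ (by positivity)
        rw [div_le_div_iff₀ hgpow two_pos]
        linarith
    _ = M ^ (1 + ε) / 2 := by ring

theorem mul_sqrt_eq_rpow {M : ℝ} (hM : 0 ≤ M) : M * √M = M ^ (3 / 2 : ℝ) := by
  rw [show (3 / 2 : ℝ) = 1 + 1 / 2 by norm_num,
    Real.rpow_add_of_nonneg hM (by norm_num) (by norm_num), Real.rpow_one, Real.sqrt_eq_rpow]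

/-- The point-plane incidence bound `I ≤ C * (M ^ (3 / 2) + k * M ^ (1 + ε))` for at most
`M ≤ p ^ 2 / 1000` points and `M` planes over `F`, when no plane contains more than `k` of the
points on a line. -/
def IncidenceBound (F : Type*) [Field F] [DecidableEq F] (p : ℕ) (C ε : ℝ) : Prop :=
  ∀ (R B : Finset (F × F × F)) (M : ℝ) (k : ℕ), #R ≤ M → #B ≤ M → M ≤ (p : ℝ) ^ 2 / 1000 →
    1 ≤ k → CollinearAtMost R B k →
    incidences R B ≤ C * (M ^ (3 / 2 : ℝ) + k * M ^ (1 + ε))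

theorem incidences_le_of_lt {R B : Finset (F × F × F)} {M g ε : ℝ} {k : ℕ} (hR : #R ≤ M)
    (hB : #B ≤ M) (hMg : M < g) (hg : 1 ≤ g) :
    incidences R B ≤ 28 * g * (M ^ (3 / 2 : ℝ) + k * M ^ (1 + ε)) := by
  have hM : 0 ≤ M := (Nat.cast_nonneg _).trans hR
  have hsqrt : √M ≤ 28 * g := Real.sqrt_le_iff.2 ⟨by linarith, by nlinarith⟩
  calc (incidences R B : ℝ) ≤ #B * #R := by exact_mod_cast incidences_le_card_mul_card R B
    _ ≤ M * M := by gcongr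
    _ = M * √M * √M := by rw [mul_assoc, Real.mul_self_sqrt hM]
    _ ≤ M * √M * (28 * g) := by gcongr
    _ = 28 * g * (M ^ (3 / 2 : ℝ) + 0) := by rw [mul_sqrt_eq_rpow hM]; ring
    _ ≤ _ := by gcongr; positivity

theorem incidenceBound_of_rpow_le {p g : ℕ} [CharP F p] {ε : ℝ} (hε : 0 ≤ ε)
    (hg : 10 ^ 7 ≤ (g : ℝ)) (hgε : 2 * 100 ^ (1 + ε) ≤ (g : ℝ) ^ ε) :
    IncidenceBound F p (28 * g) ε := by
  intro R B M k hR hB hMp hk hRB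
  obtain ⟨j, hj⟩ := pow_unbounded_of_one_lt M one_lt_two
  induction j generalizing R B M with
  | zero => exact incidences_le_of_lt hR hB (by linarith) (by linarith)
  | succ j ih =>
    rcases lt_or_ge M g with hMg | hgM
    · exact incidences_le_of_lt hR hB hMg (by linarith)
    have hM : 1 ≤ M := by linarith
    obtain ⟨R', hR', B', hB', hR'card, hB'card, hstep⟩ :=
      exists_incidences_le_mul hg hgM hR hB hMp hk hRB
    have hhalf : 100 * (M / g) ≤ M / 2 := by
      rw [← mul_div_assoc, div_le_div_iff₀ (by linarith) two_pos]
      nlinarith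
    have hrec := ih R' B' (100 * (M / g)) hR'card hB'card (by linarith) (hRB.mono hR' hB')
      (by rw [pow_succ] at hj; linarith)
    have hε_half := mul_rpow_div_le_half (M := M) (by linarith) (by linarith) (by norm_num) hgε
    have hsqrt_half : g * (100 * (M / g)) ^ (3 / 2 : ℝ) ≤ M ^ (3 / 2 : ℝ) / 2 := by
      rw [show (3 / 2 : ℝ) = 1 + 1 / 2 by norm_num]
      refine mul_rpow_div_le_half (by linarith) (by linarith) (by norm_num) ?_
      rw [show 1 + 1 / 2 = (3 / 2 : ℝ) by norm_num, ← mul_sqrt_eq_rpow (by norm_num),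
        ← Real.sqrt_eq_rpow, show (100 : ℝ) = 10 ^ 2 by norm_num, Real.sqrt_sq (by norm_num)]
      exact Real.le_sqrt_of_sq_le (by linarith)
    have hself : M ≤ M ^ (1 + ε) := Real.self_le_rpow_of_one_le hM (by linarith)
    calc (incidences R B : ℝ)
        ≤ g * (28 * g * ((100 * (M / g)) ^ (3 / 2 : ℝ) + k * (100 * (M / g)) ^ (1 + ε)) +
            (4 * √M + k) * M) := hstep.trans (by gcongr)
      _ = 28 * g * (g * (100 * (M / g)) ^ (3 / 2 : ℝ) + k * (g * (100 * (M / g)) ^ (1 + ε))) +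
            g * (4 * M ^ (3 / 2 : ℝ) + k * M) := by rw [← mul_sqrt_eq_rpow (M := M)] <;> linarith
      _ ≤ 28 * g * (M ^ (3 / 2 : ℝ) / 2 + k * (M ^ (1 + ε) / 2)) +
            g * (14 * M ^ (3 / 2 : ℝ) + k * (14 * M ^ (1 + ε))) := by
          gcongr
          · norm_num
          · linarith
      _ = 28 * g * (M ^ (3 / 2 : ℝ) + k * M ^ (1 + ε)) := by ring

theorem exists_incidenceBound.{u} {ε : ℝ} (hε : 0 < ε) :
    ∃ C : ℝ, 1 ≤ C ∧ ∀ (p : ℕ) (F : Type u) [Field F] [DecidableEq F] [CharP F p],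
      IncidenceBound F p C ε := by
  have hlim : Filter.Tendsto (fun g : ℕ => (g : ℝ) ^ ε) Filter.atTop Filter.atTop :=
    (tendsto_rpow_atTop hε).comp tendsto_natCast_atTop_atTop
  obtain ⟨g, hgε, hg⟩ := ((hlim.eventually_ge_atTop (2 * 100 ^ (1 + ε))).and
    (tendsto_natCast_atTop_atTop.eventually_ge_atTop (10 ^ 7 : ℝ))).exists
  exact ⟨28 * g, by linarith, fun p F _ _ _ => incidenceBound_of_rpow_le hε.le hg hgε⟩

end IncidenceBound

section Fibers

variable {α β : Type*} [DecidableEq β] {S : Finset α} {f : α → β} {T : Finset β}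

theorem sum_card_fiber_sq (hf : ∀ x ∈ S, f x ∈ T) :
    ∑ t ∈ T, #{x ∈ S | f x = t} ^ 2 = #{z ∈ S ×ˢ S | f z.1 = f z.2} := by
  rw [card_eq_sum_card_fiberwise (f := fun z : α × α => f z.1) (t := T)]
  · refine sum_congr rfl fun t _ => ?_
    rw [sq, ← card_product, ← filter_product, filter_filter]
    congr 1
    refine filter_congr fun z _ => ⟨?_, ?_⟩
    · rintro ⟨h₁, h₂⟩
      exact ⟨h₁.trans h₂.symm, h₁⟩
    · rintro ⟨h, h₁⟩
      exact ⟨h₁, h ▸ h₁⟩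
  · exact fun z hz => hf _ (mem_product.1 (mem_filter.1 hz).1).1

theorem card_sq_le_card_mul_card_coincidences (hf : ∀ x ∈ S, f x ∈ T) :
    #S ^ 2 ≤ #T * #{z ∈ S ×ˢ S | f z.1 = f z.2} := by
  rw [← sum_card_fiber_sq hf, card_eq_sum_card_fiberwise hf]
  exact sq_sum_le_card_mul_sum_sq

end Fibers

section RatioEnergy

variable {F ι : Type*} [Field F] [DecidableEq F]

/-- The pairs of elements of `X` whose values under `d` have ratio `s`. -/
def ratioPairs (X : Finset ι) (d : ι → F) (s : F) : Finset (ι × ι) :=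
  {z ∈ X ×ˢ X | d z.1 = s * d z.2}

/-- The ratios of the values of `d` on `X`. -/
def ratios (X : Finset ι) (d : ι → F) : Finset F :=
  (X ×ˢ X).image fun z => d z.1 / d z.2

/-- The `j`-th moment of the number of representations of a ratio of values of `d` on `X`; for
`j = 2` this is the multiplicative energy. -/
def ratioEnergy (X : Finset ι) (d : ι → F) (j : ℕ) : ℕ :=
  ∑ s ∈ ratios X d, #(ratioPairs X d s) ^ j

variable {X : Finset ι} {d : ι → F}

theorem mem_ratioPairs {s : F} {z : ι × ι} :
    z ∈ ratioPairs X d s ↔ (z.1 ∈ X ∧ z.2 ∈ X) ∧ d z.1 = s * d z.2 := by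
  rw [ratioPairs, mem_filter, mem_product]

theorem div_mem_ratios {u v : ι} (hu : u ∈ X) (hv : v ∈ X) : d u / d v ∈ ratios X d :=
  mem_image.2 ⟨(u, v), mem_product.2 ⟨hu, hv⟩, rfl⟩

theorem ratioPairs_eq_filter_div (hd : ∀ u ∈ X, d u ≠ 0) (s : F) :
    ratioPairs X d s = {z ∈ X ×ˢ X | d z.1 / d z.2 = s} :=
  filter_congr fun z hz => by rw [div_eq_iff (hd _ (mem_product.1 hz).2)]

theorem ratioEnergy_two (hd : ∀ u ∈ X, d u ≠ 0) :
    ratioEnergy X d 2 =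
      #{z ∈ (X ×ˢ X) ×ˢ X ×ˢ X | d z.1.1 * d z.2.2 = d z.2.1 * d z.1.2} := by
  simp only [ratioEnergy, ratioPairs_eq_filter_div hd]
  rw [sum_card_fiber_sq (T := ratios X d) fun z hz => mem_image_of_mem _ hz]
  congr 1
  refine filter_congr fun z hz => ?_
  simp only [mem_product] at hz
  rw [div_eq_div_iff (hd _ hz.1.2) (hd _ hz.2.2)]

variable {G : Finset F}

theorem card_pow_four_le_mul_ratioEnergy_two (hd : ∀ u ∈ X, d u ≠ 0)
    (hG : ∀ u ∈ X, ∀ v ∈ X, d u * d v ∈ G) : #X ^ 4 ≤ #G * ratioEnergy X d 2 := by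
  have hcs := card_sq_le_card_mul_card_coincidences (S := X ×ˢ X) (f := fun z => d z.1 * d z.2)
    (T := G) fun z hz => hG _ (mem_product.1 hz).1 _ (mem_product.1 hz).2
  rw [ratioEnergy_two hd]
  calc #X ^ 4 = #(X ×ˢ X) ^ 2 := by rw [card_product]; ring
    _ ≤ _ := hcs
    _ ≤ _ := Nat.mul_le_mul_left _ <|
      card_le_card_of_injOn (fun z => ((z.1.1, z.2.2), (z.2.1, z.1.2))) ?_ ?_
  · rintro ⟨⟨a, b⟩, c, e⟩ hz
    simp only [coe_filter, mem_product, Set.mem_ofPred_eq] at hz ⊢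
    obtain ⟨⟨⟨ha, hb⟩, hc, he⟩, h⟩ := hz
    exact ⟨⟨⟨ha, he⟩, hc, hb⟩, h⟩
  · rintro ⟨⟨a, b⟩, c, e⟩ _ ⟨⟨a', b'⟩, c', e'⟩ _ h
    simp only [Prod.mk.injEq] at h ⊢
    tauto

/-- The coincidences `d w * d v = d w' * d v'` between products of values of `d`, where `v` and
`v'` are second entries of pairs of ratio `q`. -/
def ratioCoincidences (X : Finset ι) (d : ι → F) (q : F) : Finset ((ι × ι × ι) × ι × ι × ι) :=
  {z ∈ (X ×ˢ ratioPairs X d q) ×ˢ X ×ˢ ratioPairs X d q |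
    d z.1.1 * d z.1.2.2 = d z.2.1 * d z.2.2.2}

theorem card_mul_ratioPairs_sq_le (hG : ∀ u ∈ X, ∀ v ∈ X, d u * d v ∈ G) (q : F) :
    (#X * #(ratioPairs X d q)) ^ 2 ≤ #(ratioPairs G id q) * #(ratioCoincidences X d q) := by
  have hcs := card_sq_le_card_mul_card_coincidences (S := X ×ˢ ratioPairs X d q)
    (f := fun z => (d z.1 * d z.2.1, d z.1 * d z.2.2)) (T := ratioPairs G id q) fun z hz => by
      rw [mem_product, mem_ratioPairs] at hz
      obtain ⟨hw, ⟨hu, hv⟩, hq⟩ := hz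
      exact mem_ratioPairs.2 ⟨⟨hG _ hw _ hu, hG _ hw _ hv⟩, by simp only [id, hq]; ring⟩
  rw [card_product] at hcs
  refine hcs.trans (Nat.mul_le_mul_left _ (card_le_card fun z hz => ?_))
  rw [mem_filter] at hz
  exact mem_filter.2 ⟨hz.1, (Prod.mk.inj hz.2).2⟩

theorem sum_card_ratioCoincidences_le (hd : ∀ u ∈ X, d u ≠ 0) (Q : Finset F) :
    ∑ q ∈ Q, #(ratioCoincidences X d q) ≤ ratioEnergy X d 3 := by
  have hcube : ratioEnergy X d 3 = #((ratios X d).sigma fun s =>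
      ratioPairs X d s ×ˢ ratioPairs X d s ×ˢ ratioPairs X d s) := by
    rw [card_sigma]
    refine sum_congr rfl fun s _ => ?_
    rw [card_product, card_product]
    ring
  rw [hcube, ← card_sigma]
  -- Up to order, `d w / d w' = d v' / d v = d u' / d u`.
  refine card_le_card_of_injOn (fun z => ⟨d z.2.1.1 / d z.2.2.1,
    (z.2.1.1, z.2.2.1), (z.2.2.2.2, z.2.1.2.2), z.2.2.2.1, z.2.1.2.1⟩) ?_ ?_
  · rintro ⟨q, ⟨w, u, v⟩, w', u', v'⟩ hz
    simp only [coe_sigma, Set.mem_sigma_iff, mem_coe, ratioCoincidences, mem_filter, mem_product,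
      mem_ratioPairs] at hz ⊢
    obtain ⟨-, ⟨⟨hw, ⟨hu, hv⟩, huv⟩, hw', ⟨hu', hv'⟩, huv'⟩, heq⟩ := hz
    have hdw' := hd _ hw'
    refine ⟨div_mem_ratios hw hw', ⟨⟨hw, hw'⟩, ?_⟩, ⟨⟨hv', hv⟩, ?_⟩, ⟨hu', hu⟩, ?_⟩
    · field_simp
    · field_simp
      linear_combination -heq
    · field_simp
      rw [huv, huv']
      linear_combination -q * heq
  · rintro ⟨q, ⟨w, u, v⟩, w', u', v'⟩ hz ⟨q₂, ⟨w₂, u₂, v₂⟩, w₂', u₂', v₂'⟩ hz₂ h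
    simp only [coe_sigma, Set.mem_sigma_iff, mem_coe, ratioCoincidences, mem_filter, mem_product,
      mem_ratioPairs] at hz hz₂
    simp only [Sigma.mk.injEq, heq_eq_eq, Prod.mk.injEq] at h
    obtain ⟨_, ⟨rfl, rfl⟩, ⟨rfl, rfl⟩, rfl, rfl⟩ := h
    have hq : q = q₂ := mul_right_cancel₀ (hd _ hz.2.1.1.2.1.2)
      (hz.2.1.1.2.2.symm.trans hz₂.2.1.1.2.2)
    rw [hq]

theorem sum_sq_pow_three_le {κ : Type*} (S : Finset κ) {ρ : κ → ℝ} (hρ0 : ∀ s, 0 ≤ ρ s) :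
    (∑ s ∈ S, ρ s ^ 2) ^ 3 ≤ (∑ s ∈ S, ρ s * √(ρ s)) ^ 2 * ∑ s ∈ S, ρ s ^ 3 := by
  have hsqrt (s : κ) : √(ρ s) * √(ρ s) = ρ s := Real.mul_self_sqrt (hρ0 s)
  have hE₂ : 0 ≤ ∑ s ∈ S, ρ s ^ 2 := sum_nonneg fun s _ => sq_nonneg _
  have hE₃ : 0 ≤ ∑ s ∈ S, ρ s ^ 3 := sum_nonneg fun s _ => pow_nonneg (hρ0 s) _
  have htwo : (∑ s ∈ S, ρ s ^ 2) ^ 2 ≤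
      (∑ s ∈ S, ρ s * √(ρ s)) * ∑ s ∈ S, ρ s ^ 2 * √(ρ s) := by
    refine sum_sq_le_sum_mul_sum_of_sq_le_mul _
      (fun s _ => mul_nonneg (hρ0 s) (Real.sqrt_nonneg _))
      (fun s _ => mul_nonneg (sq_nonneg _) (Real.sqrt_nonneg _)) (fun s _ => le_of_eq ?_)
    linear_combination -(ρ s) ^ 3 * hsqrt s
  have hfive : (∑ s ∈ S, ρ s ^ 2 * √(ρ s)) ^ 2 ≤ (∑ s ∈ S, ρ s ^ 2) * ∑ s ∈ S, ρ s ^ 3 := by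
    refine sum_sq_le_sum_mul_sum_of_sq_le_mul _ (fun s _ => sq_nonneg _)
      (fun s _ => pow_nonneg (hρ0 s) _) (fun s _ => le_of_eq ?_)
    linear_combination (ρ s) ^ 4 * hsqrt s
  set E₂ := ∑ s ∈ S, ρ s ^ 2
  set E₃ := ∑ s ∈ S, ρ s ^ 3
  set H := ∑ s ∈ S, ρ s * √(ρ s)
  rcases hE₂.eq_or_lt with h0 | hpos
  · rw [← h0, zero_pow three_ne_zero]
    positivity
  · refine le_of_mul_le_mul_left ?_ hpos
    calc E₂ * E₂ ^ 3 = (E₂ ^ 2) ^ 2 := by ring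
      _ ≤ (H * _) ^ 2 := pow_le_pow_left₀ (sq_nonneg _) htwo 2
      _ = H ^ 2 * _ ^ 2 := mul_pow _ _ _
      _ ≤ H ^ 2 * (E₂ * E₃) := mul_le_mul_of_nonneg_left hfive (sq_nonneg _)
      _ = E₂ * (H ^ 2 * E₃) := by ring

theorem sq_mul_sum_sq_pow_three_le {κ : Type*} (S : Finset κ) (T : ℝ) {ρ r e : κ → ℝ}
    (hρ0 : ∀ s, 0 ≤ ρ s) (hr0 : ∀ s, 0 ≤ r s) (he0 : ∀ s, 0 ≤ e s)
    (hρ : ∀ s, (T * ρ s) ^ 2 ≤ r s * e s) (he : ∑ s ∈ S, e s ≤ ∑ s ∈ S, ρ s ^ 3) :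
    T ^ 2 * (∑ s ∈ S, ρ s ^ 2) ^ 3 ≤ (∑ s ∈ S, ρ s * r s) * (∑ s ∈ S, ρ s ^ 3) ^ 2 := by
  have hsqrt (s : κ) : √(ρ s) * √(ρ s) = ρ s := Real.mul_self_sqrt (hρ0 s)
  have hE₃ : 0 ≤ ∑ s ∈ S, ρ s ^ 3 := sum_nonneg fun s _ => pow_nonneg (hρ0 s) _
  have hW : 0 ≤ ∑ s ∈ S, ρ s * r s := sum_nonneg fun s _ => mul_nonneg (hρ0 s) (hr0 s)
  have hthree : (T * ∑ s ∈ S, ρ s * √(ρ s)) ^ 2 ≤ (∑ s ∈ S, ρ s * r s) * ∑ s ∈ S, ρ s ^ 3 := by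
    refine le_trans ?_ (mul_le_mul_of_nonneg_left he hW)
    rw [mul_sum]
    refine sum_sq_le_sum_mul_sum_of_sq_le_mul _ (fun s _ => mul_nonneg (hρ0 s) (hr0 s))
      (fun s _ => he0 s) (fun s _ => ?_)
    calc (T * (ρ s * √(ρ s))) ^ 2 = (T * ρ s) ^ 2 * ρ s := by
          linear_combination T ^ 2 * ρ s ^ 2 * hsqrt s
      _ ≤ (r s * e s) * ρ s := mul_le_mul_of_nonneg_right (hρ s) (hρ0 s)
      _ = _ := by ring
  calc T ^ 2 * (∑ s ∈ S, ρ s ^ 2) ^ 3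
      ≤ T ^ 2 * ((∑ s ∈ S, ρ s * √(ρ s)) ^ 2 * ∑ s ∈ S, ρ s ^ 3) :=
        mul_le_mul_of_nonneg_left (sum_sq_pow_three_le S hρ0) (sq_nonneg _)
    _ = (T * ∑ s ∈ S, ρ s * √(ρ s)) ^ 2 * ∑ s ∈ S, ρ s ^ 3 := by ring
    _ ≤ _ := mul_le_mul_of_nonneg_right hthree hE₃
    _ = _ := by ring

theorem card_sq_mul_ratioEnergy_two_pow_three_le (hd : ∀ u ∈ X, d u ≠ 0)
    (hG : ∀ u ∈ X, ∀ v ∈ X, d u * d v ∈ G) :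
    #X ^ 2 * ratioEnergy X d 2 ^ 3 ≤
      (∑ q ∈ ratios X d, #(ratioPairs X d q) * #(ratioPairs G id q)) * ratioEnergy X d 3 ^ 2 := by
  rw [← Nat.cast_le (α := ℝ)]
  simp only [ratioEnergy]
  push_cast
  refine sq_mul_sum_sq_pow_three_le _ _ (e := fun q => #(ratioCoincidences X d q))
    (fun _ => Nat.cast_nonneg _) (fun _ => Nat.cast_nonneg _) (fun _ => Nat.cast_nonneg _)
    (fun q => ?_) ?_
  · exact_mod_cast card_mul_ratioPairs_sq_le hG q
  · exact_mod_cast sum_card_ratioCoincidences_le hd (ratios X d)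

end RatioEnergy

section DifferenceEnergy

variable {F : Type*} [Field F]

/-- The difference of the two entries of a pair. -/
abbrev pairDiff (u : F × F) : F := u.1 - u.2

theorem pairDiff_ne_zero {A : Finset F} : ∀ u ∈ A.offDiag, pairDiff u ≠ 0 :=
  fun _ hu => sub_ne_zero.2 (mem_offDiag.1 hu).2.2

variable [DecidableEq F] {R B : Finset (F × F × F)} {A Y Y' G : Finset F}

theorem incidences_eq_card (R B : Finset (F × F × F)) :
    incidences R B = #{z ∈ B ×ˢ R | Incident z.2 z.1} := by
  simp only [incidences, card_filter, sum_product]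

theorem card_collinear_le_of_fst_mem (hR : ∀ P ∈ R, P.1 ∈ A) (π : F × F × F) {α β γ : F}
    (hβ : β ≠ 0) : #{P ∈ R | Incident P π ∧ α * P.1 + β * P.2.1 = γ} ≤ #A := by
  refine card_le_card_of_injOn Prod.fst (fun P hP => hR P (mem_filter.1 hP).1) ?_
  intro P hP Q hQ hx
  obtain ⟨-, hPπ, hPγ⟩ := mem_filter.1 hP
  obtain ⟨-, hQπ, hQγ⟩ := mem_filter.1 hQ
  exact hPπ.eq_of_eq_of_eq hQπ hx
    (mul_left_cancel₀ hβ (by linear_combination hPγ - hQγ - α * hx))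

theorem card_collinear_le_of_snd_mem (hR : ∀ P ∈ R, P.2.1 ∈ Y) (π : F × F × F) {α β γ : F}
    (hα : α ≠ 0) : #{P ∈ R | Incident P π ∧ α * P.1 + β * P.2.1 = γ} ≤ #Y := by
  refine card_le_card_of_injOn (fun P => P.2.1) (fun P hP => hR P (mem_filter.1 hP).1) ?_
  intro P hP Q hQ hy
  obtain ⟨-, hPπ, hPγ⟩ := mem_filter.1 hP
  obtain ⟨-, hQπ, hQγ⟩ := mem_filter.1 hQ
  exact hPπ.eq_of_eq_of_eq hQπ
    (mul_left_cancel₀ hα (by linear_combination hPγ - hQγ - β * hy)) hy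

theorem collinearAtMost_max (hA : ∀ P ∈ R, P.1 ∈ A) (hY : ∀ P ∈ R, P.2.1 ∈ Y) :
    CollinearAtMost R B (max #A #Y) := by
  rintro π - α β γ (hα | hβ)
  · exact (card_collinear_le_of_snd_mem hY π hα).trans (le_max_right _ _)
  · exact (card_collinear_le_of_fst_mem hA π hβ).trans (le_max_left _ _)

/-- The solutions of `(a - b) * y' = (c - d) * y` with `a`, `b`, `c`, `d` in `A`, `y` in `Y` and
`y'` in `Y'`, arranged as `((a, y, d), (c, y', b))`. -/
def proportionalDifferences (A Y Y' : Finset F) : Finset ((F × F × F) × F × F × F) :=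
  {z ∈ (A ×ˢ Y ×ˢ A) ×ˢ A ×ˢ Y' ×ˢ A | (z.1.1 - z.2.2.2) * z.2.2.1 = (z.2.1 - z.1.2.2) * z.1.2.1}

theorem card_proportionalDifferences_le_incidences (hY : 0 ∉ Y) (hY' : 0 ∉ Y') :
    #(proportionalDifferences A Y Y') ≤
      incidences ((A ×ˢ Y ×ˢ A).image fun u => (u.1, u.2.1, u.2.2 * u.2.1))
        ((A ×ˢ Y' ×ˢ A).image fun u => (-u.1, -u.2.1, u.2.2 * u.2.1)) := by
  rw [incidences_eq_card]
  refine card_le_card_of_injOn (fun z => ((-z.2.1, -z.2.2.1, z.2.2.2 * z.2.2.1),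
    (z.1.1, z.1.2.1, z.1.2.2 * z.1.2.1))) ?_ ?_
  · rintro z hz
    obtain ⟨hmem, heq⟩ := mem_filter.1 hz
    refine mem_filter.2 ⟨mem_product.2 ⟨mem_image_of_mem _ (mem_product.1 hmem).2,
      mem_image_of_mem _ (mem_product.1 hmem).1⟩, ?_⟩
    simp only [Incident]
    linear_combination heq
  · rintro ⟨⟨a, y, d⟩, c, y', b⟩ hz ⟨⟨a₂, y₂, d₂⟩, c₂, y₂', b₂⟩ _ h
    simp only [proportionalDifferences, coe_filter, mem_product, Set.mem_ofPred_eq] at hz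
    obtain ⟨⟨⟨-, hy, -⟩, -, hy', -⟩, -⟩ := hz
    simp only [Prod.mk.injEq, neg_inj] at h
    obtain ⟨⟨rfl, rfl, hb⟩, rfl, rfl, hd⟩ := h
    rw [mul_right_cancel₀ (ne_of_mem_of_not_mem hy' hY') hb,
      mul_right_cancel₀ (ne_of_mem_of_not_mem hy hY) hd]

variable {p : ℕ} {C ε : ℝ}

theorem card_proportionalDifferences_le (hF : IncidenceBound F p C ε) {L : ℕ}
    (hY : 0 ∉ Y) (hY' : 0 ∉ Y') (hYL : #Y ≤ L) (hYL' : #Y' ≤ L) (hL : 1 ≤ L) (hAL : #A ≤ L)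
    (hM : (#A : ℝ) ^ 2 * L ≤ (p : ℝ) ^ 2 / 1000) :
    #(proportionalDifferences A Y Y') ≤
      C * (((#A : ℝ) ^ 2 * L) ^ (3 / 2 : ℝ) + L * ((#A : ℝ) ^ 2 * L) ^ (1 + ε)) := by
  have hcard {Z : Finset F} (hZ : #Z ≤ L) (f : F × F × F → F × F × F) :
      (#((A ×ˢ Z ×ˢ A).image f) : ℝ) ≤ (#A : ℝ) ^ 2 * L := by
    calc (#((A ×ˢ Z ×ˢ A).image f) : ℝ) ≤ #A * (L * #A) := by
          norm_cast
          refine card_image_le.trans ?_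
          rw [card_product, card_product]
          gcongr
      _ = (#A : ℝ) ^ 2 * L := by ring
  refine (Nat.cast_le.2 (card_proportionalDifferences_le_incidences hY hY')).trans
    (hF _ _ _ _ (hcard hYL _) (hcard hYL' _) hM hL fun π hπ α β γ hαβ => ?_)
  refine (collinearAtMost_max (A := A) (Y := Y) ?_ ?_ π hπ α β γ hαβ).trans (max_le hAL hYL)
  all_goals
    intro P hP
    obtain ⟨u, hu, rfl⟩ := mem_image.1 hP
    simp only [mem_product] at hu
    tauto

/-- The nonzero differences `a - x` with `a` in `A`. -/
def translates (A : Finset F) (x : F) : Finset F :=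
  (A.erase x).image fun a => a - x

theorem zero_notMem_translates (x : F) : 0 ∉ translates A x := by
  intro h
  obtain ⟨a, ha, hax⟩ := mem_image.1 h
  exact (mem_erase.1 ha).1 (sub_eq_zero.1 hax)

theorem card_translates_le (x : F) : #(translates A x) ≤ #A :=
  card_image_le.trans card_erase_le

theorem ratioEnergy_two_pairDiff_le_sum :
    ratioEnergy A.offDiag pairDiff 2 ≤
      ∑ w ∈ A ×ˢ A, #(proportionalDifferences A (translates A w.1) (translates A w.2)) := by
  rw [ratioEnergy_two pairDiff_ne_zero, ← card_sigma]
  refine card_le_card_of_injOn (fun z => ⟨(z.1.2.2, z.2.2.2),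
    (z.1.1.1, pairDiff z.1.2, z.2.1.2), z.2.1.1, pairDiff z.2.2, z.1.1.2⟩) ?_ ?_
  · rintro ⟨⟨⟨a, b⟩, v, x⟩, ⟨c, d⟩, w, y⟩ hz
    simp only [coe_filter, mem_product, mem_offDiag, Set.mem_ofPred_eq] at hz
    obtain ⟨⟨⟨⟨ha, hb, -⟩, hv, hx, hvx⟩, ⟨hc, hd, -⟩, hw, hy, hwy⟩, heq⟩ := hz
    simp only [coe_sigma, Set.mem_sigma_iff, mem_coe, proportionalDifferences, mem_filter,
      mem_product]
    exact ⟨⟨hx, hy⟩, ⟨⟨ha, mem_image_of_mem _ (mem_erase.2 ⟨hvx, hv⟩), hd⟩, hc,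
      mem_image_of_mem _ (mem_erase.2 ⟨hwy, hw⟩), hb⟩, heq⟩
  · rintro ⟨⟨⟨a, b⟩, v, x⟩, ⟨c, d⟩, w, y⟩ _ ⟨⟨⟨a₂, b₂⟩, v₂, x₂⟩, ⟨c₂, d₂⟩, w₂, y₂⟩ _ h
    simp only [Sigma.mk.injEq, heq_eq_eq, Prod.mk.injEq] at h
    obtain ⟨⟨rfl, rfl⟩, ⟨rfl, hv, rfl⟩, rfl, hw, rfl⟩ := h
    rw [show v = v₂ from sub_left_inj.1 hv, show w = w₂ from sub_left_inj.1 hw]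

theorem ratioEnergy_two_pairDiff_le (hF : IncidenceBound F p C ε) (hA : 1 ≤ #A)
    (hM : (#A : ℝ) ^ 2 * #A ≤ (p : ℝ) ^ 2 / 1000) :
    ratioEnergy A.offDiag pairDiff 2 ≤
      (#A : ℝ) ^ 2 * (C * (((#A : ℝ) ^ 2 * #A) ^ (3 / 2 : ℝ) +
        #A * ((#A : ℝ) ^ 2 * #A) ^ (1 + ε))) := by
  calc (ratioEnergy A.offDiag pairDiff 2 : ℝ) ≤ ∑ w ∈ A ×ˢ A,
        (#(proportionalDifferences A (translates A w.1) (translates A w.2)) : ℝ) :=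
        mod_cast ratioEnergy_two_pairDiff_le_sum
    _ ≤ ∑ _ ∈ A ×ˢ A, _ := sum_le_sum fun w _ => card_proportionalDifferences_le hF
        (zero_notMem_translates _) (zero_notMem_translates _) (card_translates_le _)
        (card_translates_le _) hA le_rfl hM
    _ = _ := by
        rw [sum_const, card_product, nsmul_eq_mul]
        push_cast
        ring

theorem sum_card_ratioPairs_mul_le_card (hG : 0 ∉ G) (S : Finset F) :
    ∑ q ∈ S, #(ratioPairs A.offDiag pairDiff q) * #(ratioPairs G id q) ≤
      #(proportionalDifferences A G G) := by
  simp only [← card_product]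
  rw [← card_sigma]
  refine card_le_card_of_injOn (fun z => ((z.2.1.1.1, z.2.2.1, z.2.1.2.2),
    (z.2.1.2.1, z.2.2.2, z.2.1.1.2))) ?_ ?_
  · rintro ⟨q, ⟨⟨a, b⟩, c, d⟩, g, g'⟩ hz
    simp only [coe_sigma, Set.mem_sigma_iff, mem_coe, mem_product, mem_ratioPairs, mem_offDiag,
      id] at hz
    obtain ⟨-, ⟨⟨⟨ha, hb, -⟩, hc, hd, -⟩, hab⟩, ⟨hg, hg'⟩, hgg'⟩ := hz
    simp only [proportionalDifferences, coe_filter, mem_product, Set.mem_ofPred_eq]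
    exact ⟨⟨⟨ha, hg, hd⟩, hc, hg', hb⟩, by linear_combination g' * hab - (c - d) * hgg'⟩
  · rintro ⟨q, ⟨⟨a, b⟩, c, d⟩, g, g'⟩ hz ⟨q₂, ⟨⟨a₂, b₂⟩, c₂, d₂⟩, g₂, g₂'⟩ hz₂ h
    simp only [coe_sigma, Set.mem_sigma_iff, mem_coe, mem_product, mem_ratioPairs, id] at hz hz₂
    simp only [Prod.mk.injEq] at h
    obtain ⟨⟨rfl, rfl, rfl⟩, rfl, rfl, rfl⟩ := h
    have hq : q = q₂ := mul_right_cancel₀ (ne_of_mem_of_not_mem hz.2.2.1.2 hG)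
      (hz.2.2.2.symm.trans hz₂.2.2.2)
    rw [hq]

end DifferenceEnergy

section RichLines

variable {F : Type*} [Field F] [DecidableEq F] {A : Finset F} {L : Finset (F × F)} {k : ℕ}

/-- The number of points of `A ×ˢ A` on the line `y = l.1 * x + l.2`. -/
def richness (A : Finset F) (l : F × F) : ℕ :=
  #{x ∈ A | l.1 * x + l.2 ∈ A}

theorem richness_le_card (A : Finset F) (l : F × F) : richness A l ≤ #A :=
  card_filter_le _ _

theorem mul_card_sq_le_mul_incidences (hk : ∀ l ∈ L, k ≤ richness A l) :
    (k * #L) ^ 2 ≤ #A * incidences (A ×ˢ L) (A ×ˢ L) := by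
  set S := {z ∈ L ×ˢ A | z.1.1 * z.2 + z.1.2 ∈ A} with hS
  have hkS : k * #L ≤ #S := by
    rw [hS, card_filter, sum_product, mul_comm, ← smul_eq_mul]
    refine card_nsmul_le_sum _ _ _ fun l hl => ?_
    rw [← card_filter]
    exact hk l hl
  have hcs := card_sq_le_card_mul_card_coincidences (S := S) (f := fun z => z.1.1 * z.2 + z.1.2)
    (T := A) fun z hz => (mem_filter.1 hz).2
  refine (Nat.pow_le_pow_left hkS 2).trans (hcs.trans (Nat.mul_le_mul_left _ ?_))
  rw [incidences_eq_card]
  refine card_le_card_of_injOn (fun z => ((z.1.2, z.2.1), (z.2.2, z.1.1))) ?_ ?_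
  · rintro ⟨⟨l, x⟩, l', x'⟩ hz
    simp only [hS, coe_filter, mem_filter, mem_product, Set.mem_ofPred_eq, Incident] at hz ⊢
    obtain ⟨⟨⟨⟨hl, hx⟩, -⟩, ⟨hl', hx'⟩, -⟩, heq⟩ := hz
    exact mem_filter.2 ⟨by simp only [mem_product]; tauto, by linear_combination heq⟩
  · rintro ⟨⟨l, x⟩, l', x'⟩ _ ⟨⟨l₂, x₂⟩, l₂', x₂'⟩ _ h
    simp only [Prod.mk.injEq] at h ⊢
    tauto

-- Away from the common point, every point of `A ×ˢ A` lies on at most one line of the pencil.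
theorem card_pencil_mul_le (hk : ∀ l ∈ L, k ≤ richness A l) {x y : F}
    (hL : ∀ l ∈ L, l.1 * x + l.2 = y) : #L * (k - 1) ≤ #A * #A := by
  set S := {z ∈ L ×ˢ A | z.2 ≠ x ∧ z.1.1 * z.2 + z.1.2 ∈ A} with hS
  have hkS : #L * (k - 1) ≤ #S := by
    rw [hS, card_filter, sum_product, ← smul_eq_mul]
    refine card_nsmul_le_sum _ _ _ fun l hl => ?_
    rw [← card_filter, ← filter_filter, filter_ne', filter_erase]
    exact (Nat.sub_le_sub_right (hk l hl) 1).trans pred_card_le_card_erase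
  refine hkS.trans ?_
  rw [← card_product]
  refine card_le_card_of_injOn (fun z => (z.2, z.1.1 * z.2 + z.1.2)) ?_ ?_
  · intro z hz
    obtain ⟨hmem, -, hA⟩ := mem_filter.1 hz
    exact mem_product.2 ⟨(mem_product.1 hmem).2, hA⟩
  · rintro ⟨⟨s, t⟩, a⟩ hz ⟨⟨s₂, t₂⟩, a₂⟩ hz₂ h
    simp only [hS, coe_filter, mem_product, Set.mem_ofPred_eq] at hz hz₂
    simp only [Prod.mk.injEq] at h
    obtain ⟨rfl, h⟩ := h
    have hxy := hL _ hz.1.1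
    have hxy₂ := hL _ hz₂.1.1
    obtain rfl : s = s₂ := mul_right_cancel₀ (sub_ne_zero.2 hz.2.1)
      (by linear_combination h - hxy + hxy₂)
    rw [add_left_cancel h]

theorem collinearAtMost_product_rich (hk : ∀ l ∈ L, k ≤ richness A l) (hk2 : 2 ≤ k)
    (hkA : k ≤ #A) : CollinearAtMost (A ×ˢ L) (A ×ˢ L) (#A * #A / (k - 1)) := by
  rintro ⟨x, s, t⟩ - α β γ hαβ
  rcases eq_or_ne β 0 with rfl | hβ
  · have hα : α ≠ 0 := by tauto
    rw [Nat.le_div_iff_mul_le (by omega)]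
    have hfst {P : F × F × F} (hP : α * P.1 + 0 * P.2.1 = γ) : P.1 = γ / α := by
      rw [eq_div_iff hα]
      linear_combination hP
    have hinj : Set.InjOn Prod.snd ({P ∈ A ×ˢ L | Incident P (x, s, t) ∧
        α * P.1 + 0 * P.2.1 = γ} : Finset (F × F × F)) := fun P hP Q hQ h =>
      Prod.ext ((hfst (mem_filter.1 hP).2.2).trans (hfst (mem_filter.1 hQ).2.2).symm) h
    rw [← card_image_of_injOn hinj]
    refine card_pencil_mul_le (A := A) (x := x) (y := s * (γ / α) + t) ?_ ?_
    all_goals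
      intro l hl
      obtain ⟨P, hP, rfl⟩ := mem_image.1 hl
      obtain ⟨hmem, hinc, hγ⟩ := mem_filter.1 hP
    · exact hk _ (mem_product.1 hmem).2
    · rw [Incident] at hinc
      rw [← hfst hγ]
      linear_combination hinc
  · refine (card_collinear_le_of_fst_mem (fun P hP => (mem_product.1 hP).1) _ hβ).trans ?_
    rw [Nat.le_div_iff_mul_le (by omega)]
    exact Nat.mul_le_mul_left _ (by omega)

theorem mul_card_sq_le_of_rich {p : ℕ} {C ε : ℝ} (hF : IncidenceBound F p C ε)
    (hk : ∀ l ∈ L, k ≤ richness A l) (hk2 : 2 ≤ k) (hkA : k ≤ #A)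
    (hM : (#A : ℝ) * #L ≤ (p : ℝ) ^ 2 / 1000) :
    ((k : ℝ) * #L) ^ 2 ≤ #A * (C * (((#A : ℝ) * #L) ^ (3 / 2 : ℝ) +
      (#A * #A / (k - 1) : ℕ) * ((#A : ℝ) * #L) ^ (1 + ε))) := by
  have hcard : (#(A ×ˢ L) : ℝ) ≤ (#A : ℝ) * #L := by rw [card_product, Nat.cast_mul]
  have hpos : 1 ≤ #A * #A / (k - 1) := by
    rw [Nat.le_div_iff_mul_le (by omega), one_mul]
    exact (Nat.sub_le k 1).trans (hkA.trans (Nat.le_mul_self _))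
  calc ((k : ℝ) * #L) ^ 2 ≤ #A * (incidences (A ×ˢ L) (A ×ˢ L) : ℝ) := by
        exact_mod_cast mul_card_sq_le_mul_incidences hk
    _ ≤ _ := mul_le_mul_of_nonneg_left (hF _ _ _ _ hcard hcard hM hpos
        (collinearAtMost_product_rich hk hk2 hkA)) (Nat.cast_nonneg _)

end RichLines

section RichLineCount

-- The two cases are the dominance of either summand of the bound.
theorem pow_four_mul_le_of_sq_mul_le {C n l k g : ℝ} (hC : 1 ≤ C) (hn : 0 < n) (hl : 0 < l)
    (hk : 0 < k) (hkn : k ≤ n) (hg : 1 ≤ g)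
    (h : k ^ 2 * l ≤ C * n ^ 2 * (√(n * l) + 2 * n ^ 2 / k * g)) :
    k ^ 4 * l ≤ 4 * C ^ 2 * n ^ 5 * g := by
  rcases le_total (2 * n ^ 2 / k * g) √(n * l) with hle | hle
  · have hsq : k ^ 2 * l ≤ 2 * C * n ^ 2 * √(n * l) :=
      calc k ^ 2 * l ≤ C * n ^ 2 * (√(n * l) + √(n * l)) := h.trans (by gcongr)
        _ = _ := by ring
    have hmul : k ^ 4 * l * l ≤ 4 * C ^ 2 * n ^ 5 * l :=
      calc k ^ 4 * l * l = (k ^ 2 * l) ^ 2 := by ring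
        _ ≤ (2 * C * n ^ 2 * √(n * l)) ^ 2 := by gcongr
        _ = 4 * C ^ 2 * n ^ 4 * √(n * l) ^ 2 := by ring
        _ = _ := by rw [Real.sq_sqrt (by positivity)]; ring
    exact (le_of_mul_le_mul_right hmul hl).trans (le_mul_of_one_le_right (by positivity) hg)
  · calc k ^ 4 * l = k ^ 2 * (k ^ 2 * l) := by ring
      _ ≤ k ^ 2 * (C * n ^ 2 * (2 * n ^ 2 / k * g + 2 * n ^ 2 / k * g)) := by
        refine mul_le_mul_of_nonneg_left (h.trans ?_) (by positivity)
        gcongr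
      _ = 4 * C * (k * n ^ 4) * g := by field_simp; ring
      _ ≤ 4 * C ^ 2 * (n * n ^ 4) * g := by
        have hC2 : C ≤ C ^ 2 := le_self_pow₀ hC two_ne_zero
        gcongr
      _ = _ := by ring

theorem pow_four_mul_le_of_mul_sq_le {C n l k K : ℝ} (hC : 1 ≤ C) (hn : 1 ≤ n) (hl : 0 ≤ l)
    (hk : 0 < k) (hkn : k ≤ n) (hln : l ≤ n ^ 4) (hK : K ≤ 2 * n ^ 2 / k)
    (h : (k * l) ^ 2 ≤
      n * (C * ((n * l) ^ (3 / 2 : ℝ) + K * (n * l) ^ (1 + 1 / 1000 : ℝ)))) :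
    k ^ 4 * l ≤ 4 * C ^ 2 * n ^ 5 * n ^ (1 / 200 : ℝ) := by
  rcases hl.eq_or_lt with rfl | hl
  · rw [mul_zero]
    positivity
  have hn0 : 0 < n := by linarith
  have hnl : 0 ≤ n * l := by positivity
  refine pow_four_mul_le_of_sq_mul_le hC hn0 hl hk hkn (Real.one_le_rpow hn (by norm_num)) ?_
  have hsmall : (n * l) ^ (1 / 1000 : ℝ) ≤ n ^ (1 / 200 : ℝ) :=
    calc (n * l) ^ (1 / 1000 : ℝ) ≤ (n ^ 5) ^ (1 / 1000 : ℝ) := by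
          rw [pow_succ' n 4]
          gcongr
      _ = n ^ (1 / 200 : ℝ) := by
          rw [← Real.rpow_natCast, ← Real.rpow_mul hn0.le]
          norm_num
  rw [← mul_sqrt_eq_rpow hnl, Real.rpow_one_add' hnl (by norm_num)] at h
  refine le_of_mul_le_mul_right ?_ hl
  calc k ^ 2 * l * l = (k * l) ^ 2 := by ring
    _ ≤ _ := h
    _ ≤ n * (C * (n * l * √(n * l) + 2 * n ^ 2 / k * (n * l * n ^ (1 / 200 : ℝ)))) := by gcongr
    _ = _ := by ring

variable {F : Type*} [Field F] [DecidableEq F] {A : Finset F} {L : Finset (F × F)} {k p : ℕ}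
  {C : ℝ}

theorem pow_four_mul_card_rich_le_of_card_le (hF : IncidenceBound F p C (1 / 1000)) (hC : 1 ≤ C)
    (hp : (#A : ℝ) ^ (32 / 9 : ℝ) ≤ (p : ℝ) ^ 2) (hk2 : 2 ≤ k) (hkA : k ≤ #A)
    (hk : ∀ l ∈ L, k ≤ richness A l) (hL : (#L : ℝ) ≤ (#A : ℝ) ^ (2555 / 1000 : ℝ) / 1000) :
    (k : ℝ) ^ 4 * #L ≤ 4 * C ^ 2 * (#A : ℝ) ^ 5 * (#A : ℝ) ^ (1 / 200 : ℝ) := by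
  have hA : (1 : ℝ) ≤ #A := by exact_mod_cast (by omega : 1 ≤ #A)
  have hk2' : (2 : ℝ) ≤ k := by exact_mod_cast hk2
  have hM : (#A : ℝ) * #L ≤ (p : ℝ) ^ 2 / 1000 :=
    calc (#A : ℝ) * #L ≤ #A * ((#A : ℝ) ^ (2555 / 1000 : ℝ) / 1000) := by gcongr
      _ = (#A : ℝ) ^ (1 + 2555 / 1000 : ℝ) / 1000 := by
        rw [Real.rpow_one_add' (by linarith) (by norm_num)]
        ring
      _ ≤ (#A : ℝ) ^ (32 / 9 : ℝ) / 1000 := by gcongr; norm_num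
      _ ≤ _ := by gcongr
  have hL4 : (#L : ℝ) ≤ (#A : ℝ) ^ 4 :=
    calc (#L : ℝ) ≤ (#A : ℝ) ^ (2555 / 1000 : ℝ) :=
        hL.trans (div_le_self (by positivity) (by norm_num))
      _ ≤ (#A : ℝ) ^ (4 : ℝ) := by gcongr; norm_num
      _ = _ := by norm_cast
  refine pow_four_mul_le_of_mul_sq_le hC hA (Nat.cast_nonneg _) (by linarith)
    (by exact_mod_cast hkA) hL4 ?_ (mul_card_sq_le_of_rich hF hk hk2 hkA hM)
  refine Nat.cast_div_le.trans ?_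
  rw [Nat.cast_sub (by omega), div_le_div_iff₀ (by push_cast; linarith) (by linarith)]
  push_cast
  nlinarith [sq_nonneg (#A : ℝ)]

theorem div_add_one_le_rpow {C n k : ℝ} (hC : 1 ≤ C) (hn : 1 ≤ n)
    (hlarge : 5000 * C ^ 2 ≤ n ^ (1 / 100 : ℝ)) (hk : n ^ (615 / 1000 : ℝ) ≤ k) :
    4 * C ^ 2 * n ^ 5 * n ^ (1 / 200 : ℝ) / k ^ 4 + 1 ≤ n ^ (2555 / 1000 : ℝ) / 1000 := by
  have hn0 : 0 < n := by linarith
  have hpow : (n ^ (615 / 1000 : ℝ)) ^ 4 = n ^ (246 / 100 : ℝ) := by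
    rw [← Real.rpow_natCast, ← Real.rpow_mul hn0.le]
    norm_num
  have hexp : n ^ 5 * n ^ (1 / 200 : ℝ) = n ^ (2545 / 1000 : ℝ) * n ^ (246 / 100 : ℝ) := by
    rw [← Real.rpow_natCast, ← Real.rpow_add hn0, ← Real.rpow_add hn0]
    norm_num
  have hone : 1 ≤ C ^ 2 * n ^ (2545 / 1000 : ℝ) :=
    one_le_mul_of_one_le_of_one_le (one_le_pow₀ hC) (Real.one_le_rpow hn (by norm_num))
  calc 4 * C ^ 2 * n ^ 5 * n ^ (1 / 200 : ℝ) / k ^ 4 + 1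
      ≤ 4 * C ^ 2 * n ^ 5 * n ^ (1 / 200 : ℝ) / (n ^ (615 / 1000 : ℝ)) ^ 4 + 1 := by gcongr
    _ = 4 * C ^ 2 * n ^ (2545 / 1000 : ℝ) + 1 := by
      rw [hpow, mul_assoc, hexp, ← mul_assoc, mul_div_cancel_right₀ _ (by positivity)]
    _ ≤ 5000 * C ^ 2 * n ^ (2545 / 1000 : ℝ) / 1000 := by linarith
    _ ≤ n ^ (1 / 100 : ℝ) * n ^ (2545 / 1000 : ℝ) / 1000 := by gcongr
    _ = _ := by
      rw [← Real.rpow_add hn0]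
      norm_num

theorem pow_four_mul_card_rich_le (hF : IncidenceBound F p C (1 / 1000)) (hC : 1 ≤ C)
    (hp : (#A : ℝ) ^ (32 / 9 : ℝ) ≤ (p : ℝ) ^ 2)
    (hlarge : 5000 * C ^ 2 ≤ (#A : ℝ) ^ (1 / 100 : ℝ)) (hk2 : 2 ≤ k) (hkA : k ≤ #A)
    (hkn : (#A : ℝ) ^ (615 / 1000 : ℝ) ≤ k) (hk : ∀ l ∈ L, k ≤ richness A l) :
    (k : ℝ) ^ 4 * #L ≤ 4 * C ^ 2 * (#A : ℝ) ^ 5 * (#A : ℝ) ^ (1 / 200 : ℝ) := by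
  have hA : (1 : ℝ) ≤ #A := by exact_mod_cast (by omega : 1 ≤ #A)
  have hk4 : (0 : ℝ) < (k : ℝ) ^ 4 := pow_pos (Nat.cast_pos.2 (by omega)) 4
  by_contra! hcon
  set T := 4 * C ^ 2 * (#A : ℝ) ^ 5 * (#A : ℝ) ^ (1 / 200 : ℝ) with hT
  -- A set of just over `T / k ^ 4` lines is small enough for the incidence bound.
  have hfloor : ⌊T / (k : ℝ) ^ 4⌋₊ + 1 ≤ #L := by
    rw [Nat.add_one_le_iff, Nat.floor_lt (by positivity), div_lt_iff₀ hk4, mul_comm]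
    exact hcon
  obtain ⟨L', hL'L, hL'⟩ := exists_subset_card_eq hfloor
  have hlt : T / (k : ℝ) ^ 4 < #L' := by
    rw [hL']
    exact_mod_cast Nat.lt_floor_add_one _
  have hle : (#L' : ℝ) ≤ T / (k : ℝ) ^ 4 + 1 := by
    rw [hL', Nat.cast_add_one]
    gcongr
    exact Nat.floor_le (by positivity)
  have hbound := pow_four_mul_card_rich_le_of_card_le hF hC hp hk2 hkA
    (fun l hl => hk l (hL'L hl)) (hle.trans (div_add_one_le_rpow hC hA hlarge hkn))
  rw [div_lt_iff₀ hk4, mul_comm] at hlt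
  exact hlt.not_ge hbound

end RichLineCount

section Moments

theorem pow_four_le_sum_Icc (i : ℕ) : i ^ 4 ≤ ∑ k ∈ Icc 1 i, 4 * k ^ 3 := by
  induction i with
  | zero => simp
  | succ i ih =>
    rw [sum_Icc_succ_top (by omega)]
    refine le_trans ?_ (Nat.add_le_add_right ih _)
    ring_nf
    nlinarith [sq_nonneg i, Nat.zero_le (i ^ 2), Nat.zero_le i, Nat.zero_le (i ^ 3)]

variable {α : Type*} {L : Finset α}

theorem sum_pow_four_le_sum_Icc {N : ℕ} {f : α → ℕ} (hf : ∀ l ∈ L, f l ≤ N) :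
    ∑ l ∈ L, f l ^ 4 ≤ ∑ k ∈ Icc 1 N, 4 * k ^ 3 * #{l ∈ L | k ≤ f l} := by
  simp only [card_filter, mul_sum, mul_ite, mul_one, mul_zero]
  rw [sum_comm]
  refine sum_le_sum fun l hl => (pow_four_le_sum_Icc (f l)).trans (le_of_eq ?_)
  rw [← sum_filter]
  refine sum_congr ?_ fun _ _ => rfl
  ext k
  have := hf l hl
  simp only [mem_Icc, mem_filter]
  omega

theorem sum_pow_four_le_mul_log {N κ : ℕ} {f : α → ℕ} {T : ℝ} (hf : ∀ l ∈ L, f l ≤ N)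
    (hκN : κ ≤ N) (hκ : ∀ l ∈ L, κ ≤ f l)
    (hT : ∀ k, κ ≤ k → k ≤ N → (k : ℝ) ^ 4 * #{l ∈ L | k ≤ f l} ≤ T) :
    ∑ l ∈ L, (f l : ℝ) ^ 4 ≤ 4 * T * (1 + Real.log N) := by
  have hT0 : 0 ≤ T := le_trans (by positivity) (hT κ le_rfl hκN)
  have hlevel : ∀ k ∈ Icc 1 N, 4 * (k : ℝ) ^ 3 * #{l ∈ L | k ≤ f l} ≤ 4 * T * (k : ℝ)⁻¹ := by
    intro k hk
    rw [mem_Icc] at hk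
    have hk0 : (0 : ℝ) < k := by exact_mod_cast (by omega : 0 < k)
    have hmax : #{l ∈ L | k ≤ f l} ≤ #{l ∈ L | max k κ ≤ f l} :=
      card_le_card fun l hl => by
        rw [mem_filter] at hl ⊢
        exact ⟨hl.1, max_le hl.2 (hκ l hl.1)⟩
    have hbound : (k : ℝ) ^ 4 * #{l ∈ L | k ≤ f l} ≤ T :=
      calc (k : ℝ) ^ 4 * #{l ∈ L | k ≤ f l}
          ≤ (max k κ : ℕ) ^ 4 * #{l ∈ L | max k κ ≤ f l} := by
            have := le_max_left k κ
            gcongr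
        _ ≤ T := hT _ (le_max_right _ _) (max_le hk.2 hκN)
    rw [← div_eq_mul_inv, le_div_iff₀ hk0]
    linarith
  calc ∑ l ∈ L, (f l : ℝ) ^ 4 ≤ ∑ k ∈ Icc 1 N, 4 * (k : ℝ) ^ 3 * #{l ∈ L | k ≤ f l} := by
        exact_mod_cast sum_pow_four_le_sum_Icc hf
    _ ≤ ∑ k ∈ Icc 1 N, 4 * T * (k : ℝ)⁻¹ := sum_le_sum hlevel
    _ = 4 * T * (harmonic N : ℚ) := by
        rw [← mul_sum, harmonic_eq_sum_Icc]
        push_cast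
        rfl
    _ ≤ _ := by
        gcongr
        exact harmonic_le_one_add_log N

theorem sum_sq_pow_three_le_sum_sq_mul {i : α → ℝ} (hi : ∀ t, 0 ≤ i t) :
    (∑ t ∈ L, i t ^ 2) ^ 3 ≤ (∑ t ∈ L, i t) ^ 2 * ∑ t ∈ L, i t ^ 4 := by
  have htwo : (∑ t ∈ L, i t ^ 2) ^ 2 ≤ (∑ t ∈ L, i t) * ∑ t ∈ L, i t ^ 3 :=
    sum_sq_le_sum_mul_sum_of_sq_le_mul _ (fun t _ => hi t)
      (fun t _ => pow_nonneg (hi t) _) (fun t _ => le_of_eq (by ring))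
  have hthree : (∑ t ∈ L, i t ^ 3) ^ 2 ≤ (∑ t ∈ L, i t ^ 2) * ∑ t ∈ L, i t ^ 4 :=
    sum_sq_le_sum_mul_sum_of_sq_le_mul _ (fun t _ => sq_nonneg _)
      (fun t _ => pow_nonneg (hi t) _) (fun t _ => le_of_eq (by ring))
  have h₂ : 0 ≤ ∑ t ∈ L, i t ^ 2 := sum_nonneg fun t _ => sq_nonneg _
  have h₄ : 0 ≤ ∑ t ∈ L, i t ^ 4 := sum_nonneg fun t _ => pow_nonneg (hi t) _
  set I₁ := ∑ t ∈ L, i t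
  set I₂ := ∑ t ∈ L, i t ^ 2
  set I₃ := ∑ t ∈ L, i t ^ 3
  set I₄ := ∑ t ∈ L, i t ^ 4
  rcases h₂.eq_or_lt with h0 | hpos
  · rw [← h0, zero_pow three_ne_zero]
    positivity
  · refine le_of_mul_le_mul_left ?_ hpos
    calc I₂ * I₂ ^ 3 = (I₂ ^ 2) ^ 2 := by ring
      _ ≤ (I₁ * I₃) ^ 2 := pow_le_pow_left₀ (sq_nonneg _) htwo 2
      _ = I₁ ^ 2 * I₃ ^ 2 := mul_pow _ _ _
      _ ≤ I₁ ^ 2 * (I₂ * I₄) := mul_le_mul_of_nonneg_left hthree (sq_nonneg _)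
      _ = I₂ * (I₁ ^ 2 * I₄) := by ring

end Moments

section ThirdEnergy

variable {F : Type*} [Field F] [DecidableEq F] {A T : Finset F} {s : F}

theorem card_filter_sub_mul_eq_richness (A : Finset F) (s t : F) :
    #{z ∈ A ×ˢ A | z.1 - s * z.2 = t} = richness A (s, t) := by
  refine card_bij (fun z _ => z.2) ?_ ?_ ?_
  · rintro ⟨a, c⟩ hz
    simp only [mem_filter, mem_product] at hz ⊢
    obtain ⟨⟨ha, hc⟩, rfl⟩ := hz
    exact ⟨hc, by rwa [add_sub_cancel]⟩
  · rintro ⟨a, c⟩ hz ⟨a', c'⟩ hz' (rfl : c = c')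
    simp only [mem_filter] at hz hz'
    rw [sub_left_inj.1 (hz.2.trans hz'.2.symm)]
  · intro c hc
    rw [mem_filter] at hc
    exact ⟨(s * c + t, c), mem_filter.2 ⟨mem_product.2 ⟨hc.2, hc.1⟩, add_sub_cancel_left _ _⟩, rfl⟩

theorem sum_richness (hT : ∀ z ∈ A ×ˢ A, z.1 - s * z.2 ∈ T) :
    ∑ t ∈ T, richness A (s, t) = #A ^ 2 := by
  simp_rw [← card_filter_sub_mul_eq_richness]
  rw [← card_eq_sum_card_fiberwise hT, card_product, sq]

theorem card_ratioPairs_pairDiff_le_sum (hT : ∀ z ∈ A ×ˢ A, z.1 - s * z.2 ∈ T) :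
    #(ratioPairs A.offDiag pairDiff s) ≤ ∑ t ∈ T, richness A (s, t) ^ 2 := by
  simp_rw [← card_filter_sub_mul_eq_richness]
  rw [sum_card_fiber_sq hT]
  refine card_le_card_of_injOn (fun z => ((z.1.1, z.2.1), (z.1.2, z.2.2))) ?_ ?_
  · rintro ⟨⟨a, b⟩, c, d⟩ hz
    rw [mem_coe, mem_ratioPairs] at hz
    simp only [coe_filter, mem_offDiag, mem_product, Set.mem_ofPred_eq] at hz ⊢
    obtain ⟨⟨⟨ha, hb, -⟩, hc, hd, -⟩, h⟩ := hz
    exact ⟨⟨⟨ha, hc⟩, hb, hd⟩, by linear_combination h⟩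
  · rintro ⟨⟨a, b⟩, c, d⟩ _ ⟨⟨a', b'⟩, c', d'⟩ _ h
    simp only [Prod.mk.injEq] at h ⊢
    tauto

theorem card_ratioPairs_pairDiff_le_add (hT : ∀ z ∈ A ×ˢ A, z.1 - s * z.2 ∈ T) (κ : ℕ) :
    #(ratioPairs A.offDiag pairDiff s) ≤
      κ * #A ^ 2 + ∑ t ∈ T with κ ≤ richness A (s, t), richness A (s, t) ^ 2 := by
  refine (card_ratioPairs_pairDiff_le_sum hT).trans ?_
  rw [← sum_filter_add_sum_filter_not T fun t => κ ≤ richness A (s, t), add_comm]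
  refine Nat.add_le_add_right ?_ _
  calc ∑ t ∈ T with ¬ κ ≤ richness A (s, t), richness A (s, t) ^ 2
      ≤ ∑ t ∈ T with ¬ κ ≤ richness A (s, t), κ * richness A (s, t) :=
        sum_le_sum fun t ht => by
          rw [sq]
          exact Nat.mul_le_mul_right _ (not_le.1 (mem_filter.1 ht).2).le
    _ ≤ ∑ t ∈ T, κ * richness A (s, t) := sum_le_sum_of_subset (filter_subset _ _)
    _ = κ * #A ^ 2 := by rw [← mul_sum, sum_richness hT]

theorem pow_three_le_of_le_add {a h ρ : ℝ} (ha : 0 ≤ a) (hh : 0 ≤ h) (hρ : 0 ≤ ρ)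
    (hle : ρ ≤ a + h) : ρ ^ 3 ≤ 2 * a * ρ ^ 2 + 8 * h ^ 3 := by
  rcases le_total h a with hha | hah
  · calc ρ ^ 3 = ρ * ρ ^ 2 := by ring
      _ ≤ 2 * a * ρ ^ 2 := mul_le_mul_of_nonneg_right (by linarith) (sq_nonneg _)
      _ ≤ _ := le_add_of_nonneg_right (by positivity)
  · calc ρ ^ 3 ≤ (2 * h) ^ 3 := pow_le_pow_left₀ hρ (by linarith) 3
      _ = 8 * h ^ 3 := by ring
      _ ≤ _ := le_add_of_nonneg_left (by positivity)

theorem card_ratioPairs_pairDiff_pow_three_le (hT : ∀ z ∈ A ×ˢ A, z.1 - s * z.2 ∈ T) (κ : ℕ) :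
    (#(ratioPairs A.offDiag pairDiff s) : ℝ) ^ 3 ≤
      2 * (κ * (#A : ℝ) ^ 2) * (#(ratioPairs A.offDiag pairDiff s) : ℝ) ^ 2 +
      8 * ((#A : ℝ) ^ 4 *
        ∑ t ∈ T with κ ≤ richness A (s, t), (richness A (s, t) : ℝ) ^ 4) := by
  set Q := {t ∈ T | κ ≤ richness A (s, t)}
  have hsum : ∑ t ∈ Q, (richness A (s, t) : ℝ) ≤ (#A : ℝ) ^ 2 := by
    exact_mod_cast (sum_le_sum_of_subset (filter_subset _ _)).trans (sum_richness hT).le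
  have hthree : (∑ t ∈ Q, (richness A (s, t) : ℝ) ^ 2) ^ 3 ≤
      (#A : ℝ) ^ 4 * ∑ t ∈ Q, (richness A (s, t) : ℝ) ^ 4 :=
    calc (∑ t ∈ Q, (richness A (s, t) : ℝ) ^ 2) ^ 3
        ≤ (∑ t ∈ Q, (richness A (s, t) : ℝ)) ^ 2 * ∑ t ∈ Q, (richness A (s, t) : ℝ) ^ 4 :=
          sum_sq_pow_three_le_sum_sq_mul fun _ => Nat.cast_nonneg _
      _ ≤ ((#A : ℝ) ^ 2) ^ 2 * ∑ t ∈ Q, (richness A (s, t) : ℝ) ^ 4 := by gcongr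
      _ = _ := by ring
  refine (pow_three_le_of_le_add (by positivity) (sum_nonneg fun t _ => sq_nonneg _)
    (Nat.cast_nonneg _) ?_).trans (add_le_add_right (mul_le_mul_of_nonneg_left hthree ?_) _)
  · exact_mod_cast card_ratioPairs_pairDiff_le_add hT κ
  · norm_num

theorem ratioEnergy_three_pairDiff_le
    (hT : ∀ s ∈ ratios A.offDiag pairDiff, ∀ z ∈ A ×ˢ A, z.1 - s * z.2 ∈ T) (κ : ℕ) :
    (ratioEnergy A.offDiag pairDiff 3 : ℝ) ≤
      2 * (κ * (#A : ℝ) ^ 2) * ratioEnergy A.offDiag pairDiff 2 +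
      8 * ((#A : ℝ) ^ 4 * ∑ l ∈ ratios A.offDiag pairDiff ×ˢ T with κ ≤ richness A l,
        (richness A l : ℝ) ^ 4) := by
  have hlines : ∑ l ∈ ratios A.offDiag pairDiff ×ˢ T with κ ≤ richness A l,
      (richness A l : ℝ) ^ 4 = ∑ s ∈ ratios A.offDiag pairDiff,
        ∑ t ∈ T with κ ≤ richness A (s, t), (richness A (s, t) : ℝ) ^ 4 := by
    simp only [sum_filter, sum_product]
  simp only [ratioEnergy, hlines]
  push_cast
  rw [mul_sum, mul_sum, mul_sum, ← sum_add_distrib]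
  exact sum_le_sum fun s hs => card_ratioPairs_pairDiff_pow_three_le (hT s hs) κ

end ThirdEnergy

section EnergyEstimates

theorem rpow_le_sq_div_of_large {n q a : ℝ} (hn : 1 ≤ n)
    (hq : n ^ (32 / 9 : ℝ) ≤ q ^ 2) (hlarge : 1000 ≤ n ^ (1 / 100 : ℝ)) (ha : a ≤ 3545 / 1000) :
    n ^ a ≤ q ^ 2 / 1000 := by
  have hn0 : 0 < n := by linarith
  rw [le_div_iff₀ (by norm_num), mul_comm]
  calc 1000 * n ^ a ≤ n ^ (1 / 100 : ℝ) * n ^ a := by gcongr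
    _ = n ^ (1 / 100 + a) := (Real.rpow_add hn0 _ _).symm
    _ ≤ n ^ (32 / 9 : ℝ) := by gcongr; linarith
    _ ≤ q ^ 2 := hq

theorem sq_div_two_le_card_offDiag {α : Type*} {A : Finset α} (hA : 2 ≤ #A) :
    (#A : ℝ) ^ 2 / 2 ≤ #A.offDiag := by
  have hA' : (2 : ℝ) ≤ #A := by exact_mod_cast hA
  rw [offDiag_card, Nat.cast_sub (Nat.le_mul_self _)]
  push_cast
  nlinarith

theorem one_add_log_le_rpow {n : ℝ} (hn : 1 ≤ n) :
    1 + Real.log n ≤ 11 * n ^ (1 / 10 : ℝ) := by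
  have hlog := Real.log_le_rpow_div (x := n) (ε := 1 / 10) (by linarith) (by norm_num)
  have hone : 1 ≤ n ^ (1 / 10 : ℝ) := Real.one_le_rpow hn (by norm_num)
  linarith

variable {F : Type*} [Field F] [DecidableEq F] {A G : Finset F} {p : ℕ} {C : ℝ}

theorem ratioEnergy_two_le_rpow (hF : IncidenceBound F p C (1 / 1000)) (hC : 0 ≤ C)
    (hA : 1 ≤ #A) (hM : (#A : ℝ) ^ (3 : ℝ) ≤ (p : ℝ) ^ 2 / 1000) :
    (ratioEnergy A.offDiag pairDiff 2 : ℝ) ≤ 2 * C * (#A : ℝ) ^ (65 / 10 : ℝ) := by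
  have hn : (1 : ℝ) ≤ #A := by exact_mod_cast hA
  have hcube : (#A : ℝ) ^ 2 * #A = (#A : ℝ) ^ (3 : ℝ) := by
    rw [← pow_succ]
    norm_cast
  refine (ratioEnergy_two_pairDiff_le hF hA (hcube ▸ hM)).trans ?_
  rw [hcube, ← Real.rpow_mul (by linarith), ← Real.rpow_mul (by linarith)]
  set n : ℝ := (#A : ℝ)
  have hn0 : 0 < n := by linarith
  have hmain : n ^ (3 * (3 / 2) : ℝ) = n ^ (45 / 10 : ℝ) := by norm_num
  have herror : n * n ^ (3 * (1 + 1 / 1000) : ℝ) ≤ n ^ (45 / 10 : ℝ) := by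
    rw [← Real.rpow_one_add' hn0.le (by norm_num)]
    gcongr
    norm_num
  calc n ^ 2 * (C * (n ^ (3 * (3 / 2) : ℝ) + n * n ^ (3 * (1 + 1 / 1000) : ℝ)))
      ≤ n ^ 2 * (C * (n ^ (45 / 10 : ℝ) + n ^ (45 / 10 : ℝ))) := by rw [hmain]; gcongr
    _ = 2 * C * (n ^ (2 : ℝ) * n ^ (45 / 10 : ℝ)) := by rw [Real.rpow_two]; ring
    _ = 2 * C * n ^ (65 / 10 : ℝ) := by rw [← Real.rpow_add hn0]; norm_num

theorem card_pow_eight_div_le_mul_ratioEnergy_two (hA : 2 ≤ #A)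
    (hG : ∀ u ∈ A.offDiag, ∀ v ∈ A.offDiag, pairDiff u * pairDiff v ∈ G) :
    (#A : ℝ) ^ 8 / 16 ≤ #G * ratioEnergy A.offDiag pairDiff 2 :=
  calc (#A : ℝ) ^ 8 / 16 = ((#A : ℝ) ^ 2 / 2) ^ 4 := by ring
    _ ≤ (#A.offDiag : ℝ) ^ 4 := by gcongr; exact sq_div_two_le_card_offDiag hA
    _ ≤ #G * ratioEnergy A.offDiag pairDiff 2 := by
      exact_mod_cast card_pow_four_le_mul_ratioEnergy_two pairDiff_ne_zero hG

theorem card_le_card_of_pairDiff_mul_mem (hA : 2 ≤ #A)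
    (hG : ∀ u ∈ A.offDiag, ∀ v ∈ A.offDiag, pairDiff u * pairDiff v ∈ G) (hC : 0 < C)
    (hlarge : 32 * C ≤ (#A : ℝ) ^ (1 / 100 : ℝ))
    (hE₂ : (ratioEnergy A.offDiag pairDiff 2 : ℝ) ≤ 2 * C * (#A : ℝ) ^ (65 / 10 : ℝ)) :
    #A ≤ #G := by
  have hn : (1 : ℝ) ≤ #A := by exact_mod_cast (by omega : 1 ≤ #A)
  have hlower := (card_pow_eight_div_le_mul_ratioEnergy_two hA hG).trans
    (mul_le_mul_of_nonneg_left hE₂ (Nat.cast_nonneg _))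
  rw [← Nat.cast_le (α := ℝ)]
  set n : ℝ := (#A : ℝ)
  have hn0 : 0 < n := by linarith
  refine le_of_mul_le_mul_right (le_trans ?_ hlower)
    (by positivity : 0 < 2 * C * n ^ (65 / 10 : ℝ))
  calc n * (2 * C * n ^ (65 / 10 : ℝ)) = n * (32 * C) * n ^ (65 / 10 : ℝ) / 16 := by ring
    _ ≤ n * n ^ (5 / 10 : ℝ) * n ^ (65 / 10 : ℝ) / 16 := by
      gcongr
      exact hlarge.trans (Real.rpow_le_rpow_of_exponent_le hn (by norm_num))
    _ = n ^ 8 / 16 := by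
      rw [← Real.rpow_one_add' hn0.le (by norm_num), ← Real.rpow_add hn0, ← Real.rpow_natCast]
      norm_num

theorem card_proportionalDifferences_le_rpow (hF : IncidenceBound F p C (1 / 1000)) (hC : 0 ≤ C)
    (hA : 1 ≤ #A) (hG₀ : 0 ∉ G) (hAG : #A ≤ #G) (hG : (#G : ℝ) ≤ (#A : ℝ) ^ (1501 / 1000 : ℝ))
    (hM : (#A : ℝ) ^ (3501 / 1000 : ℝ) ≤ (p : ℝ) ^ 2 / 1000) :
    (#(proportionalDifferences A G G) : ℝ) ≤ 2 * C * (#A : ℝ) ^ (52515 / 10000 : ℝ) := by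
  have hn : (1 : ℝ) ≤ #A := by exact_mod_cast hA
  have hn0 : (0 : ℝ) < #A := by linarith
  have hprod : (#A : ℝ) ^ 2 * #G ≤ (#A : ℝ) ^ (3501 / 1000 : ℝ) :=
    calc (#A : ℝ) ^ 2 * #G ≤ (#A : ℝ) ^ (2 : ℝ) * (#A : ℝ) ^ (1501 / 1000 : ℝ) := by
          rw [Real.rpow_two]; gcongr
      _ = _ := by rw [← Real.rpow_add hn0]; norm_num
  refine (card_proportionalDifferences_le hF hG₀ hG₀ le_rfl le_rfl (by omega) hAG
    (hprod.trans hM)).trans ?_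
  set n : ℝ := (#A : ℝ)
  have hmain : (n ^ 2 * #G) ^ (3 / 2 : ℝ) ≤ n ^ (52515 / 10000 : ℝ) :=
    calc _ ≤ (n ^ (3501 / 1000 : ℝ)) ^ (3 / 2 : ℝ) := by gcongr
      _ = _ := by rw [← Real.rpow_mul hn0.le]; norm_num
  have herror : #G * (n ^ 2 * #G) ^ (1 + 1 / 1000 : ℝ) ≤ n ^ (52515 / 10000 : ℝ) :=
    calc _ ≤ n ^ (1501 / 1000 : ℝ) * (n ^ (3501 / 1000 : ℝ)) ^ (1 + 1 / 1000 : ℝ) := by gcongr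
      _ = n ^ (1501 / 1000 + 3501 / 1000 * (1 + 1 / 1000) : ℝ) := by
        rw [← Real.rpow_mul hn0.le, ← Real.rpow_add hn0]
      _ ≤ _ := by gcongr; norm_num
  calc _ ≤ C * (n ^ (52515 / 10000 : ℝ) + n ^ (52515 / 10000 : ℝ)) := by gcongr
    _ = _ := by ring

theorem sum_richness_pow_four_le {κ : ℕ} (hF : IncidenceBound F p C (1 / 1000)) (hC : 1 ≤ C)
    (hp : (#A : ℝ) ^ (32 / 9 : ℝ) ≤ (p : ℝ) ^ 2)
    (hlarge : 5000 * C ^ 2 ≤ (#A : ℝ) ^ (1 / 100 : ℝ)) (hκ : 2 ≤ κ) (hκA : κ ≤ #A)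
    (hκn : (#A : ℝ) ^ (615 / 1000 : ℝ) ≤ κ) (L : Finset (F × F)) :
    ∑ l ∈ L with κ ≤ richness A l, (richness A l : ℝ) ^ 4 ≤
      4 * (4 * C ^ 2 * (#A : ℝ) ^ 5 * (#A : ℝ) ^ (1 / 200 : ℝ)) * (1 + Real.log #A) :=
  sum_pow_four_le_mul_log (fun l _ => richness_le_card A l) hκA
    (fun _ hl => (mem_filter.1 hl).2) fun k hκk hkA =>
      pow_four_mul_card_rich_le hF hC hp hlarge (hκ.trans hκk) hkA
        (hκn.trans (by exact_mod_cast hκk)) fun _ hl => (mem_filter.1 hl).2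

theorem exists_nat_between_rpow {N : ℕ} (hN : 2 ≤ N) :
    ∃ κ : ℕ, 2 ≤ κ ∧ κ ≤ N ∧ (N : ℝ) ^ (615 / 1000 : ℝ) ≤ κ ∧
      (κ : ℝ) ≤ 2 * (N : ℝ) ^ (615 / 1000 : ℝ) := by
  have hN' : (1 : ℝ) < N := by exact_mod_cast hN
  have hone : 1 < (N : ℝ) ^ (615 / 1000 : ℝ) := Real.one_lt_rpow hN' (by norm_num)
  refine ⟨⌈(N : ℝ) ^ (615 / 1000 : ℝ)⌉₊, Nat.lt_ceil.2 (by exact_mod_cast hone),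
    Nat.ceil_le.2 (Real.rpow_le_self_of_one_le hN'.le (by norm_num)), Nat.le_ceil _, ?_⟩
  linarith [Nat.ceil_lt_add_one (by linarith : 0 ≤ (N : ℝ) ^ (615 / 1000 : ℝ))]

theorem poor_add_rich_le_rpow {n κ E₂ S₄ : ℝ} (hn : 1 ≤ n) (hC : 1 ≤ C)
    (hκ : κ ≤ 2 * n ^ (615 / 1000 : ℝ)) (hE₂₀ : 0 ≤ E₂) (hE₂ : E₂ ≤ 2 * C * n ^ (65 / 10 : ℝ))
    (hS₄ : S₄ ≤ 4 * (4 * C ^ 2 * n ^ 5 * n ^ (1 / 200 : ℝ)) * (1 + Real.log n)) :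
    2 * (κ * n ^ 2) * E₂ + 8 * (n ^ 4 * S₄) ≤ 1416 * C ^ 2 * n ^ (9115 / 1000 : ℝ) := by
  have hn0 : 0 < n := by linarith
  have hpoor : 2 * (κ * n ^ 2) * E₂ ≤ 8 * C ^ 2 * n ^ (9115 / 1000 : ℝ) :=
    calc 2 * (κ * n ^ 2) * E₂
        ≤ 2 * (2 * n ^ (615 / 1000 : ℝ) * n ^ 2) * (2 * C * n ^ (65 / 10 : ℝ)) := by gcongr
      _ = 8 * C * (n ^ (615 / 1000 : ℝ) * n ^ (2 : ℝ) * n ^ (65 / 10 : ℝ)) := by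
        rw [Real.rpow_two]; ring
      _ = 8 * C * n ^ (9115 / 1000 : ℝ) := by
        rw [← Real.rpow_add hn0, ← Real.rpow_add hn0]; norm_num
      _ ≤ 8 * C ^ 2 * n ^ (9115 / 1000 : ℝ) := by gcongr; exact le_self_pow₀ hC two_ne_zero
  have hrich : 8 * (n ^ 4 * S₄) ≤ 1408 * C ^ 2 * n ^ (9115 / 1000 : ℝ) :=
    calc 8 * (n ^ 4 * S₄)
        ≤ 8 * (n ^ 4 * (4 * (4 * C ^ 2 * n ^ 5 * n ^ (1 / 200 : ℝ)) *
          (11 * n ^ (1 / 10 : ℝ)))) := by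
          gcongr
          exact hS₄.trans (mul_le_mul_of_nonneg_left (one_add_log_le_rpow hn) (by positivity))
      _ = 1408 * C ^ 2 * (n ^ 9 * n ^ (1 / 200 : ℝ) * n ^ (1 / 10 : ℝ)) := by ring
      _ = 1408 * C ^ 2 * n ^ (9105 / 1000 : ℝ) := by
        rw [← Real.rpow_natCast n, ← Real.rpow_add hn0, ← Real.rpow_add hn0]; norm_num
      _ ≤ _ := by gcongr; norm_num
  linarith

theorem ratioEnergy_three_le_rpow (hF : IncidenceBound F p C (1 / 1000)) (hC : 1 ≤ C)
    (hA : 2 ≤ #A) (hp : (#A : ℝ) ^ (32 / 9 : ℝ) ≤ (p : ℝ) ^ 2)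
    (hlarge : 5000 * C ^ 2 ≤ (#A : ℝ) ^ (1 / 100 : ℝ))
    (hE₂ : (ratioEnergy A.offDiag pairDiff 2 : ℝ) ≤ 2 * C * (#A : ℝ) ^ (65 / 10 : ℝ)) :
    (ratioEnergy A.offDiag pairDiff 3 : ℝ) ≤ 1416 * C ^ 2 * (#A : ℝ) ^ (9115 / 1000 : ℝ) := by
  obtain ⟨κ, hκ, hκA, hκn, hκn'⟩ := exists_nat_between_rpow hA
  let intercepts : Finset F :=
    (ratios A.offDiag pairDiff ×ˢ A ×ˢ A).image fun z => z.2.1 - z.1 * z.2.2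
  refine (ratioEnergy_three_pairDiff_le (T := intercepts) (fun s hs z hz =>
    mem_image_of_mem (fun z => z.2.1 - z.1 * z.2.2) (mk_mem_product hs hz)) κ).trans ?_
  exact poor_add_rich_le_rpow (by exact_mod_cast (by omega : 1 ≤ #A)) hC hκn'
    (Nat.cast_nonneg _) hE₂ (sum_richness_pow_four_le hF hC hp hlarge hκ hκA hκn _)

/-- The powers of `n` in the lower and upper bounds for `|X|² E₂³ ≤ W E₃²` differ by
`n ^ (155 / 10000)`. -/
theorem rpow_le_of_sq_mul_pow_three_le {n g X E₂ E₃ W : ℝ} (hn : 1 ≤ n) (hX : n ^ 2 / 2 ≤ X)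
    (hg : g ≤ n ^ (1501 / 1000 : ℝ)) (hE₂ : 0 ≤ E₂) (hlower : n ^ 8 / 16 ≤ g * E₂)
    (hW : W ≤ 2 * C * n ^ (52515 / 10000 : ℝ)) (hE₃ : 0 ≤ E₃)
    (hE₃' : E₃ ≤ 1416 * C ^ 2 * n ^ (9115 / 1000 : ℝ)) (hC : 0 ≤ C)
    (hholder : X ^ 2 * E₂ ^ 3 ≤ W * E₃ ^ 2) :
    n ^ (155 / 10000 : ℝ) ≤ 32768 * 1416 ^ 2 * C ^ 5 := by
  have hn0 : 0 < n := by linarith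
  have hE₂' : n ^ (6499 / 1000 : ℝ) / 16 ≤ E₂ := by
    have hsplit : n ^ 8 = n ^ (1501 / 1000 : ℝ) * n ^ (6499 / 1000 : ℝ) := by
      rw [← Real.rpow_add hn0, ← Real.rpow_natCast]; norm_num
    rw [hsplit, mul_div_assoc] at hlower
    exact le_of_mul_le_mul_left (hlower.trans (by gcongr)) (by positivity)
  have hcube : n ^ (23497 / 1000 : ℝ) = n ^ 4 * (n ^ (6499 / 1000 : ℝ)) ^ 3 := by
    rw [← Real.rpow_natCast, ← Real.rpow_natCast, ← Real.rpow_mul hn0.le, ← Real.rpow_add hn0]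
    norm_num
  have hsquare : n ^ (234815 / 10000 : ℝ) =
      n ^ (52515 / 10000 : ℝ) * (n ^ (9115 / 1000 : ℝ)) ^ 2 := by
    rw [← Real.rpow_natCast, ← Real.rpow_mul hn0.le, ← Real.rpow_add hn0]
    norm_num
  refine le_of_mul_le_mul_right (a := n ^ (234815 / 10000 : ℝ)) ?_ (by positivity)
  calc n ^ (155 / 10000 : ℝ) * n ^ (234815 / 10000 : ℝ) = n ^ (23497 / 1000 : ℝ) := by
        rw [← Real.rpow_add hn0]; norm_num
    _ = 16384 * ((n ^ 2 / 2) ^ 2 * (n ^ (6499 / 1000 : ℝ) / 16) ^ 3) := by rw [hcube]; ring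
    _ ≤ 16384 * (X ^ 2 * E₂ ^ 3) := by gcongr
    _ ≤ 16384 * (2 * C * n ^ (52515 / 10000 : ℝ) *
        (1416 * C ^ 2 * n ^ (9115 / 1000 : ℝ)) ^ 2) := by
      refine mul_le_mul_of_nonneg_left (hholder.trans ?_) (by norm_num)
      gcongr
    _ = 32768 * 1416 ^ 2 * C ^ 5 * n ^ (234815 / 10000 : ℝ) := by rw [hsquare]; ring

theorem rpow_le_card_of_pairDiff_mul_mem (hF : IncidenceBound F p C (1 / 1000)) (hC : 1 ≤ C)
    (hp : (#A : ℝ) ^ (32 / 9 : ℝ) ≤ (p : ℝ) ^ 2)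
    (hlarge : 32768 * 1416 ^ 2 * C ^ 5 < (#A : ℝ) ^ (1 / 100 : ℝ)) (hG₀ : 0 ∉ G)
    (hG : ∀ u ∈ A.offDiag, ∀ v ∈ A.offDiag, pairDiff u * pairDiff v ∈ G) :
    (#A : ℝ) ^ (1501 / 1000 : ℝ) ≤ #G := by
  by_contra! hsmall
  have hC₁ : C ≤ C ^ 5 := le_self_pow₀ hC (by norm_num)
  have hC₂ : C ^ 2 ≤ C ^ 5 := pow_le_pow_right₀ hC (by norm_num)
  have hn1 : (1 : ℝ) < #A := by
    by_contra! hle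
    linarith [Real.rpow_le_one (Nat.cast_nonneg _) hle (by norm_num : (0 : ℝ) ≤ 1 / 100)]
  have hA : 2 ≤ #A := by exact_mod_cast hn1
  have hM : ∀ a ≤ (3545 / 1000 : ℝ), (#A : ℝ) ^ a ≤ (p : ℝ) ^ 2 / 1000 := fun a ha =>
    rpow_le_sq_div_of_large hn1.le hp (by linarith) ha
  have hE₂ := ratioEnergy_two_le_rpow hF (by linarith) (by omega) (hM 3 (by norm_num))
  have hAG := card_le_card_of_pairDiff_mul_mem hA hG (by linarith) (by linarith) hE₂
  have hW := card_proportionalDifferences_le_rpow hF (by linarith) (by omega) hG₀ hAG hsmall.le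
    (hM _ (by norm_num))
  have hE₃ := ratioEnergy_three_le_rpow hF hC hA hp (by linarith) hE₂
  have hholder := (card_sq_mul_ratioEnergy_two_pow_three_le pairDiff_ne_zero hG).trans
    (Nat.mul_le_mul_right _ (sum_card_ratioPairs_mul_le_card hG₀ _))
  have hexp := rpow_le_of_sq_mul_pow_three_le hn1.le (sq_div_two_le_card_offDiag hA) hsmall.le
    (Nat.cast_nonneg _) (card_pow_eight_div_le_mul_ratioEnergy_two hA hG) hW (Nat.cast_nonneg _)
    hE₃ (by linarith) (by exact_mod_cast hholder)
  have hmono : (#A : ℝ) ^ (1 / 100 : ℝ) ≤ (#A : ℝ) ^ (155 / 10000 : ℝ) :=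
    Real.rpow_le_rpow_of_exponent_le hn1.le (by norm_num)
  linarith

end EnergyEstimates

section DifferenceProducts

open scoped Pointwise

variable {F : Type*} [Field F] [DecidableEq F] {A : Finset F}

theorem pairDiff_mul_mem_sub_mul_sub {u v : F × F} (hu : u ∈ A.offDiag) (hv : v ∈ A.offDiag) :
    pairDiff u * pairDiff v ∈ (A - A) * (A - A) := by
  rw [mem_offDiag] at hu hv
  exact mul_mem_mul (sub_mem_sub hu.1 hu.2.1) (sub_mem_sub hv.1 hv.2.1)

theorem rpow_le_card_sub_mul_sub {p : ℕ} {C : ℝ} (hF : IncidenceBound F p C (1 / 1000))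
    (hC : 1 ≤ C) (hp : (#A : ℝ) ≤ (p : ℝ) ^ (9 / 16 : ℝ))
    (hlarge : 32768 * 1416 ^ 2 * C ^ 5 < (#A : ℝ) ^ (1 / 100 : ℝ)) :
    (#A : ℝ) ^ (1501 / 1000 : ℝ) ≤ #((A - A) * (A - A)) := by
  have hp' : (#A : ℝ) ^ (32 / 9 : ℝ) ≤ (p : ℝ) ^ 2 :=
    calc (#A : ℝ) ^ (32 / 9 : ℝ) ≤ ((p : ℝ) ^ (9 / 16 : ℝ)) ^ (32 / 9 : ℝ) := by gcongr
      _ = (p : ℝ) ^ 2 := by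
        rw [← Real.rpow_mul (Nat.cast_nonneg _), ← Real.rpow_natCast]
        norm_num
  calc (#A : ℝ) ^ (1501 / 1000 : ℝ) ≤ #(((A - A) * (A - A)).erase 0) :=
        rpow_le_card_of_pairDiff_mul_mem hF hC hp' hlarge (notMem_erase _ _) fun u hu v hv =>
          mem_erase.2 ⟨mul_ne_zero (pairDiff_ne_zero u hu) (pairDiff_ne_zero v hv),
            pairDiff_mul_mem_sub_mul_sub hu hv⟩
    _ ≤ #((A - A) * (A - A)) := by exact_mod_cast card_erase_le

theorem rpow_le_mul_card_sub_mul_sub {K : ℝ} (hsmall : (#A : ℝ) ^ (1 / 100 : ℝ) ≤ K) :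
    (#A : ℝ) ^ (1501 / 1000 : ℝ) ≤ K ^ (1501 / 10 : ℝ) * #((A - A) * (A - A)) := by
  obtain rfl | hA := A.eq_empty_or_nonempty
  · simp
  have hpow : (#A : ℝ) ^ (1501 / 1000 : ℝ) ≤ K ^ (1501 / 10 : ℝ) :=
    calc (#A : ℝ) ^ (1501 / 1000 : ℝ) = ((#A : ℝ) ^ (1 / 100 : ℝ)) ^ (1501 / 10 : ℝ) := by
          rw [← Real.rpow_mul (Nat.cast_nonneg _)]
          norm_num
      _ ≤ K ^ (1501 / 10 : ℝ) := by gcongr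
  have hone : (1 : ℝ) ≤ #((A - A) * (A - A)) :=
    Nat.one_le_cast.2 ((hA.sub hA).mul (hA.sub hA)).card_pos
  exact hpow.trans (le_mul_of_one_le_right ((by positivity : (0 : ℝ) ≤ _).trans hpow) hone)

theorem stmt5_general.{u} :
    ∃ c : ℝ, 0 < c ∧ ∃ c' : ℝ, 0 < c' ∧
      ∀ (p : ℕ) (F : Type u) [Field F] [DecidableEq F] [CharP F p] (A : Finset F),
        (#A : ℝ) ≤ (p : ℝ) ^ (9 / 16 : ℝ) →
          c' * (#A : ℝ) ^ (3 / 2 + c) ≤ #((A - A) * (A - A)) := by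
  obtain ⟨C, hC, hinc⟩ := exists_incidenceBound.{u} (ε := 1 / 1000) (by norm_num)
  set K : ℝ := 32768 * 1416 ^ 2 * C ^ 5
  have hK1 : 1 ≤ K := by linarith [one_le_pow₀ hC (n := 5)]
  have hK' : 1 ≤ K ^ (1501 / 10 : ℝ) := Real.one_le_rpow hK1 (by norm_num)
  refine ⟨1 / 1000, by norm_num, (K ^ (1501 / 10 : ℝ))⁻¹, by positivity, fun p F _ _ _ A hp => ?_⟩
  rw [inv_mul_le_iff₀ (by positivity), show (3 / 2 + 1 / 1000 : ℝ) = 1501 / 1000 by norm_num]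
  obtain hlarge | hsmall := lt_or_ge K ((#A : ℝ) ^ (1 / 100 : ℝ))
  · exact (rpow_le_card_sub_mul_sub (hinc p F) hC hp hlarge).trans
      (le_mul_of_one_le_left (Nat.cast_nonneg _) hK')
  · exact rpow_le_mul_card_sub_mul_sub hsmall

end DifferenceProducts

theorem stmt5 :
    ∃ c : ℝ, 0 < c ∧ ∃ c' : ℝ, 0 < c' ∧
      ∀ (p : ℕ), p.Prime → Odd p →
        ∀ A : Finset (ZMod p), 2 ≤ A.card → (A.card : ℝ) ≤ (p : ℝ) ^ ((9 : ℝ) / 16) →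
          c' * min (p : ℝ) ((A.card : ℝ) ^ ((3 : ℝ) / 2 + c)) ≤
            ((prodSet p (diffSet p A A) (diffSet p A A)).card : ℝ) := by
  obtain ⟨c, hc, c', hc', hbound⟩ := stmt5_general
  refine ⟨c, hc, c', hc', fun p hp _ A _ hAp => ?_⟩
  have : Fact p.Prime := ⟨hp⟩
  exact (mul_le_mul_of_nonneg_left (min_le_right _ _) hc'.le).trans (hbound p (ZMod p) A hAp)
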